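/- arXiv:2208.00917 — 4 statements merged into one kernel-verified Lean document; each statement's English description precedes it below -/
import Mathlib

section
/- Suppose that J is ferromagnetic and that the subgraph G_{>0} is connected. Then for every t ≥ 0, all zeros of the entire function x ↦ Z_{G,t}(x) are simple; that is, for every x ∈ ℂ with Z_{G,t}(x) = 0, the derivative Z_{G,t}′(x) ≠ 0. -/
open scoped Real

noncomputable def spin (b : Bool) : ℝ := if b then 1 else -1

noncomputable def pairProd {V : Type} (σ : V → Bool) (e : Sym2 V) : ℝ :=
  Sym2.lift ⟨fun u v => spin (σ u) * spin (σ v), fun _ _ => mul_comm _ _⟩ e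

/-- The Ising partition function `Z_{G,t}(x)` with an extra coupling `t` at the edge
`u₀v₀`, couplings `J` on the edge set `E`, and (complex) external field `i·x`. -/
noncomputable def IsingZ {V : Type} [Fintype V] [DecidableEq V]
    (E : Finset (Sym2 V)) (J : Sym2 V → ℝ) (u₀ v₀ : V) (t x : ℂ) : ℂ :=
  ∑ σ : V → Bool, Complex.exp
    (t * ((spin (σ u₀) * spin (σ v₀) : ℝ) : ℂ)
      + ((∑ e ∈ E, J e * pairProd σ e : ℝ) : ℂ)
      + Complex.I * x * ((∑ u, spin (σ u) : ℝ) : ℂ))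

/-!
Write `Z_v` for the partition function after raising the field at `v` by `π / 2`; this is also the
derivative of `Z` in the field at `v`. The Lee–Yang property amounts to
`0 < Im (Z * conj Z_v)` in the open upper half-plane of fields, and in this form it is visibly
preserved by adding a ferromagnetic bond. In the limit of real fields it gives the Rayleigh
inequality `Z * Z_uv ≤ Z_u * Z_v`. Hence, if `Z` and one `Z_u` vanish at some real fields, `Z_v`
vanishes across every positive bond, thus everywhere by connectedness; the zero then survives any
change of the fields, contradicting `0 < Z` at zero field. So at a real zero no `Z_v` vanishes, and
by the Rayleigh inequality they all have the same sign, so the derivative `∑ v, Z_v` in a uniform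
field is nonzero.
-/

open Finset Function
open scoped ComplexConjugate

section Activities

variable {V : Type*}

/-- The activities `p` of the Lee–Yang theorem: at every site the spin `-1`, encoded as `false`, is
strictly favoured. -/
def FavorsMinus (p : V → Bool → ℂ) : Prop :=
  ∀ v, ‖p v true‖ < ‖p v false‖

/-- The activities of real fields, up to positive factors: they are nonzero, and flipping the spin
conjugates them. -/
def IsRealActivity (p : V → Bool → ℂ) : Prop :=
  ∀ v b, p v b ≠ 0 ∧ p v (!b) = conj (p v b)

/-- The single-site activities `exp (i θ_v σ_v)` of the site-dependent field `θ`. -/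
noncomputable def fieldActivity (θ : V → ℂ) (v : V) (b : Bool) : ℂ :=
  Complex.exp (Complex.I * θ v * spin b)

/-- The factor `exp (i (π / 2) σ_v) = i σ_v` at the site `v`. Multiplying activities by it raises
the field at `v` by `π / 2`, and also differentiates with respect to that field. -/
noncomputable def quarterTurn [DecidableEq V] (v : V) : V → Bool → ℂ :=
  Pi.mulSingle v fun b => Complex.I * spin b

lemma spin_not (b : Bool) : spin (!b) = -spin b := by cases b <;> simp [spin]

lemma exp_mul_spin_mul_spin (j : ℝ) (a b : Bool) :
    Real.exp (j * (spin a * spin b)) = Real.cosh j + Real.sinh j * (spin a * spin b) := by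
  cases a <;> cases b <;>
    simp [spin, Real.cosh_add_sinh, ← sub_eq_add_neg, Real.cosh_sub_sinh]

lemma FavorsMinus.mul {p q : V → Bool → ℂ} (hp : FavorsMinus p)
    (hq : ∀ v, ‖q v true‖ ≤ ‖q v false‖) (hq₀ : ∀ v, q v false ≠ 0) : FavorsMinus (p * q) := by
  intro v
  simp only [Pi.mul_apply, norm_mul]
  exact mul_lt_mul_of_lt_of_le_of_nonneg_of_pos (hp v) (hq v) (norm_nonneg _)
    (norm_pos_iff.2 (hq₀ v))

lemma FavorsMinus.mul_mulSingle [DecidableEq V] {p : V → Bool → ℂ} (hp : FavorsMinus p) (v : V)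
    {f : Bool → ℂ} (hf : ‖f true‖ ≤ ‖f false‖) (hf₀ : f false ≠ 0) :
    FavorsMinus (p * Pi.mulSingle v f) := by
  refine hp.mul (fun u => ?_) fun u => ?_ <;> rcases eq_or_ne u v with rfl | huv <;> simp [*]

lemma FavorsMinus.mul_quarterTurn [DecidableEq V] {p : V → Bool → ℂ} (hp : FavorsMinus p)
    (v : V) : FavorsMinus (p * quarterTurn v) :=
  hp.mul_mulSingle v (by simp [spin]) (by simp [spin])

lemma favorsMinus_fieldActivity {θ : V → ℂ} (hθ : ∀ v, 0 < (θ v).im) :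
    FavorsMinus (fieldActivity θ) := by
  intro v
  simp only [fieldActivity, Complex.norm_exp, Real.exp_lt_exp]
  simpa [spin] using neg_lt_self (hθ v)

lemma isRealActivity_one : IsRealActivity (1 : V → Bool → ℂ) := fun _ _ => by simp

lemma IsRealActivity.mul {p q : V → Bool → ℂ} (hp : IsRealActivity p) (hq : IsRealActivity q) :
    IsRealActivity (p * q) := fun v b =>
  ⟨mul_ne_zero (hp v b).1 (hq v b).1, by
    simp only [Pi.mul_apply, (hp v b).2, (hq v b).2, map_mul]⟩

lemma isRealActivity_quarterTurn [DecidableEq V] (v : V) : IsRealActivity (quarterTurn v) := by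
  intro u b
  rcases eq_or_ne u v with rfl | huv
  · cases b <;> simp [quarterTurn, spin]
  · simp [quarterTurn, huv]

lemma isRealActivity_fieldActivity {θ : V → ℂ} (hθ : ∀ v, (θ v).im = 0) :
    IsRealActivity (fieldActivity θ) := by
  refine fun v b => ⟨Complex.exp_ne_zero _, ?_⟩
  simp [fieldActivity, ← Complex.exp_conj, Complex.conj_eq_iff_im.2 (hθ v), spin_not]

lemma IsRealActivity.piecewise {p q : V → Bool → ℂ} (hp : IsRealActivity p)
    (hq : IsRealActivity q) (s : Finset V) [DecidablePred (· ∈ s)] :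
    IsRealActivity (s.piecewise p q) := by
  intro v
  by_cases hv : v ∈ s
  · simpa only [piecewise_eq_of_mem _ _ _ hv] using hp v
  · simpa only [piecewise_eq_of_notMem _ _ _ hv] using hq v

lemma quarterTurn_mul_self [DecidableEq V] (v : V) :
    quarterTurn v * quarterTurn v = Pi.mulSingle v (-1) := by
  rw [quarterTurn, ← Pi.mulSingle_mul]
  congr 1
  ext b
  cases b <;> simp [spin]

end Activities

section PartitionFunction

variable {V : Type*} [Fintype V] [DecidableEq V]

/-- The partition function of the spin weight `w` with site-dependent activities `p`. -/
noncomputable def activityZ (w : (V → Bool) → ℝ) (p : V → Bool → ℂ) : ℂ :=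
  ∑ σ : V → Bool, (w σ : ℂ) * ∏ v, p v (σ v)

lemma prod_mul_mulSingle (p : V → Bool → ℂ) (v : V) (f : Bool → ℂ) (σ : V → Bool) :
    ∏ u, (p * Pi.mulSingle v f : V → Bool → ℂ) u (σ u) = f (σ v) * ∏ u, p u (σ u) := by
  have hf : ∏ u, (Pi.mulSingle v f : V → Bool → ℂ) u (σ u) = f (σ v) := by
    rw [Fintype.prod_eq_single v fun u hu => by simp [hu], Pi.mulSingle_eq_same]
  simp only [Pi.mul_apply, prod_mul_distrib, hf, mul_comm]

lemma activityZ_mul_mulSingle (w : (V → Bool) → ℝ) (p : V → Bool → ℂ) (v : V) (f : Bool → ℂ) :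
    activityZ w (p * Pi.mulSingle v f) = (f true + f false) / 2 * activityZ w p -
      Complex.I * (f true - f false) / 2 * activityZ w (p * quarterTurn v) := by
  have hf : ∀ b, f b = (f true + f false) / 2 -
      Complex.I * (f true - f false) / 2 * (Complex.I * spin b) := by
    intro b
    cases b <;> simp only [spin] <;> push_cast <;> grind [Complex.I_mul_I]
  simp only [activityZ, quarterTurn, prod_mul_mulSingle, mul_sum, ← sum_sub_distrib]
  refine sum_congr rfl fun σ _ => ?_
  rw [hf (σ v)]
  ring

lemma activityZ_mul_quarterTurn_mul_self (w : (V → Bool) → ℝ) (p : V → Bool → ℂ) (v : V) :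
    activityZ w (p * quarterTurn v * quarterTurn v) = -activityZ w p := by
  rw [mul_assoc, quarterTurn_mul_self, activityZ_mul_mulSingle]
  simp

lemma activityZ_update_eq_zero {w : (V → Bool) → ℝ} {p : V → Bool → ℂ} {v : V}
    (hp : ∀ b, p v b ≠ 0) (h₀ : activityZ w p = 0) (hv : activityZ w (p * quarterTurn v) = 0)
    (f : Bool → ℂ) : activityZ w (update p v f) = 0 := by
  have hf : update p v f = p * Pi.mulSingle v (f / p v) := by
    have hfv : p v * (f / p v) = f := funext fun b => mul_div_cancel₀ (f b) (hp b)
    rw [Pi.mulSingle, ← update_eq_self v p, ← update_mul, mul_one, update_self, hfv]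
    simp
  rw [hf, activityZ_mul_mulSingle, h₀, hv, mul_zero, mul_zero, sub_zero]

lemma activityZ_comp_not {w : (V → Bool) → ℝ} (hw : ∀ σ, w σᶜ = w σ) (p : V → Bool → ℂ) :
    activityZ w (fun v b => p v (!b)) = activityZ w p := by
  rw [activityZ, ← Equiv.sum_comp compl_involutive.toPerm]
  simp [activityZ, hw]

lemma IsRealActivity.im_activityZ {w : (V → Bool) → ℝ} (hw : ∀ σ, w σᶜ = w σ)
    {p : V → Bool → ℂ} (hp : IsRealActivity p) : (activityZ w p).im = 0 := by
  have hconj : conj (activityZ w p) = activityZ w fun v b => p v (!b) := by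
    simp [activityZ, (hp _ _).2]
  exact Complex.conj_eq_iff_im.1 (hconj.trans (activityZ_comp_not hw p))

lemma continuous_activityZ (w : (V → Bool) → ℝ) : Continuous (activityZ w) := by
  unfold activityZ
  fun_prop

end PartitionFunction

section LeeYang

variable {V : Type*} [Fintype V] [DecidableEq V]

/-- The Lee–Yang property of a spin weight, in terms of activities. Unlike nonvanishing for fields
in the open upper half-plane, it covers vanishing activities of the spin `+1`, which correspond to
the field `i ∞`. -/
def IsLeeYang (w : (V → Bool) → ℝ) : Prop :=
  ∀ p : V → Bool → ℂ, FavorsMinus p → activityZ w p ≠ 0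

lemma isLeeYang_one : IsLeeYang (1 : (V → Bool) → ℝ) := by
  intro p hp
  have hfactor : activityZ 1 p = ∏ v, (p v true + p v false) := by
    simp only [activityZ, Pi.one_apply, Complex.ofReal_one, one_mul]
    simp [← Fintype.piFinset_univ, ← prod_univ_sum]
  rw [hfactor, prod_ne_zero_iff]
  intro v _ h
  exact (hp v).ne (by rw [eq_neg_of_add_eq_zero_left h, norm_neg])

-- Multiplying by the site activity `f` at `v` annihilates `Z`, so `f` cannot favour the spin `-1`.
lemma IsLeeYang.im_mul_conj_quarterTurn_pos {w : (V → Bool) → ℝ} (hw : IsLeeYang w)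
    {p : V → Bool → ℂ} (hp : FavorsMinus p) (v : V) :
    0 < (activityZ w p * conj (activityZ w (p * quarterTurn v))).im := by
  have hZ := hw p hp
  set Z := activityZ w p
  set Zv := activityZ w (p * quarterTurn v) with hZv
  by_contra! him
  let f : Bool → ℂ := fun b => Zv - Complex.I * spin b * Z
  have hnorm : ‖f true‖ ≤ ‖f false‖ := by
    refine le_of_sq_le_sq ?_ (norm_nonneg _)
    have hdiff : ‖f true‖ ^ 2 - ‖f false‖ ^ 2 = 4 * (Z * conj Zv).im := by
      simp [f, spin, Complex.sq_norm, Complex.normSq_apply]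
      ring
    linarith
  have hne : f false ≠ 0 := by
    intro hfalse
    have htrue : f true = 0 := norm_le_zero_iff.1 (hnorm.trans_eq (by rw [hfalse, norm_zero]))
    have hIZ : 2 * Complex.I * Z = f false - f true := by
      simp only [f, spin, if_true, Bool.false_eq_true, if_false]
      push_cast
      ring
    exact mul_ne_zero (by simp) hZ (hIZ.trans (by rw [hfalse, htrue, sub_zero]))
  refine hw _ (hp.mul_mulSingle v hnorm hne) ?_
  rw [activityZ_mul_mulSingle, ← hZv]
  simp only [f, spin, if_true, Bool.false_eq_true, if_false]
  push_cast
  linear_combination (Z * Zv) * Complex.I_mul_I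

lemma IsLeeYang.im_mul_conj_quarterTurn_nonneg {w : (V → Bool) → ℝ} (hw : IsLeeYang w)
    {p : V → Bool → ℂ} (hp : ∀ v, ‖p v true‖ ≤ ‖p v false‖) (hp₀ : ∀ v, p v false ≠ 0) (v : V) :
    0 ≤ (activityZ w p * conj (activityZ w (p * quarterTurn v))).im := by
  let q : ℝ → V → Bool → ℂ := fun η => fieldActivity (fun _ => η * Complex.I) * p
  have hq : Continuous q := by
    unfold q fieldActivity
    fun_prop
  have hq₀ : q 0 = p := by ext; simp [q, fieldActivity]
  have hZ := continuous_activityZ w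
  have hcont : Continuous fun η =>
      (activityZ w (q η) * conj (activityZ w (q η * quarterTurn v))).im := by fun_prop
  rw [← hq₀]
  refine ge_of_tendsto (hcont.tendsto 0 |>.mono_left (nhdsWithin_le_nhds (s := Set.Ioi 0))) ?_
  filter_upwards [self_mem_nhdsWithin] with η hη
  exact (hw.im_mul_conj_quarterTurn_pos
    ((favorsMinus_fieldActivity fun _ => by simpa using hη).mul hp hp₀) v).le

-- Fixing the spin at `u` to `-1` turns `2 Z` into `Z + i Z_u`.
lemma IsLeeYang.rayleigh {w : (V → Bool) → ℝ} (hw : IsLeeYang w) (hsymm : ∀ σ, w σᶜ = w σ)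
    {p : V → Bool → ℂ} (hp : IsRealActivity p) (u v : V) :
    (activityZ w p).re * (activityZ w (p * quarterTurn u * quarterTurn v)).re ≤
      (activityZ w (p * quarterTurn u)).re * (activityZ w (p * quarterTurn v)).re := by
  let f : Bool → ℂ := Pi.single false 2
  have hpin : ∀ q, activityZ w (q * Pi.mulSingle u f) =
      activityZ w q + Complex.I * activityZ w (q * quarterTurn u) := by
    intro q
    rw [activityZ_mul_mulSingle]
    simp only [f, Pi.single_eq_same, Pi.single_eq_of_ne (Bool.false_ne_true.symm)]
    ring
  have him := hw.im_mul_conj_quarterTurn_nonneg (p := p * Pi.mulSingle u f) ?_ ?_ v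
  · have hu := isRealActivity_quarterTurn u
    have hv := isRealActivity_quarterTurn v
    rw [mul_right_comm, hpin, hpin, mul_right_comm p] at him
    have hexpand : ((activityZ w p + Complex.I * activityZ w (p * quarterTurn u)) *
        conj (activityZ w (p * quarterTurn v) +
          Complex.I * activityZ w (p * quarterTurn u * quarterTurn v))).im =
        (activityZ w (p * quarterTurn u)).re * (activityZ w (p * quarterTurn v)).re -
          (activityZ w p).re * (activityZ w (p * quarterTurn u * quarterTurn v)).re := by
      simp [hp.im_activityZ hsymm, (hp.mul hu).im_activityZ hsymm,
        (hp.mul hv).im_activityZ hsymm, ((hp.mul hu).mul hv).im_activityZ hsymm]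
      ring
    linarith
  · intro x
    have hnorm : ‖p x true‖ = ‖p x false‖ := by
      rw [← Bool.not_false, (hp x false).2, Complex.norm_conj]
    rcases eq_or_ne x u with rfl | hx <;> simp [f, *]
  · intro x
    rcases eq_or_ne x u with rfl | hx <;> simp [f, hp x false |>.1, *]

end LeeYang

section Bonds

variable {V : Type*}

/-- The spin weight `w` with an additional pair interaction `j` between `u` and `v`. -/
noncomputable def withBond (w : (V → Bool) → ℝ) (u v : V) (j : ℝ) (σ : V → Bool) : ℝ :=
  w σ * Real.exp (j * (spin (σ u) * spin (σ v)))

variable [Fintype V] [DecidableEq V]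

lemma activityZ_withBond (w : (V → Bool) → ℝ) (u v : V) (j : ℝ) (p : V → Bool → ℂ) :
    activityZ (withBond w u v j) p = Real.cosh j * activityZ w p -
      Real.sinh j * activityZ w (p * quarterTurn u * quarterTurn v) := by
  have huv : activityZ w (p * quarterTurn u * quarterTurn v) =
      ∑ σ : V → Bool, w σ * -(spin (σ u) * spin (σ v)) * ∏ x, p x (σ x) := by
    simp only [activityZ, quarterTurn, prod_mul_mulSingle]
    refine sum_congr rfl fun σ _ => ?_
    linear_combination
      (w σ * (spin (σ u) * spin (σ v)) * ∏ x, p x (σ x) : ℂ) * Complex.I_mul_I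
  rw [huv]
  simp only [activityZ, withBond, exp_mul_spin_mul_spin, mul_sum, ← sum_sub_distrib]
  refine sum_congr rfl fun σ _ => ?_
  push_cast
  ring

lemma isLeeYang_withBond {w : (V → Bool) → ℝ} (hw : IsLeeYang w) (u v : V) {j : ℝ}
    (hj : 0 ≤ j) : IsLeeYang (withBond w u v j) := by
  intro p hp hzero
  have hv := hw.im_mul_conj_quarterTurn_pos hp v
  have huv := hw.im_mul_conj_quarterTurn_pos (hp.mul_quarterTurn v) u
  rw [activityZ_withBond, mul_right_comm, sub_eq_zero] at hzero
  set Z := activityZ w p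
  set Zv := activityZ w (p * quarterTurn v)
  set Zuv := activityZ w (p * quarterTurn v * quarterTurn u)
  have hbal : Real.cosh j * (Z * conj Zv).im = -(Real.sinh j * (Zv * conj Zuv).im) := by
    have := congrArg (fun z => (z * conj Zv).im) hzero
    simp only [mul_assoc, Complex.im_ofReal_mul] at this
    rw [this, ← mul_neg, ← Complex.conj_im, map_mul, Complex.conj_conj, mul_comm Zuv]
  have hpos := mul_pos (Real.cosh_pos j) hv
  have hnonneg := mul_nonneg (Real.sinh_nonneg_iff.2 hj) huv.le
  linarith

-- If `Z` and `Z_u` vanish with the bond, then without it `Z = τ Z_uv` and `Z_u = -τ Z_v` for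
-- `τ = tanh j`, and the Rayleigh inequality reads `τ Z_uv ^ 2 ≤ -τ Z_v ^ 2`.
lemma activityZ_withBond_quarterTurn_eq_zero {w : (V → Bool) → ℝ} (hw : IsLeeYang w)
    (hsymm : ∀ σ, w σᶜ = w σ) {u v : V} {j : ℝ} (hj : 0 < j) {p : V → Bool → ℂ}
    (hp : IsRealActivity p) (h₀ : activityZ (withBond w u v j) p = 0)
    (hu : activityZ (withBond w u v j) (p * quarterTurn u) = 0) :
    activityZ (withBond w u v j) (p * quarterTurn v) = 0 := by
  have hcosh := Real.cosh_pos j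
  have hsinh := Real.sinh_pos_iff.2 hj
  have hrayleigh := hw.rayleigh hsymm hp u v
  have him := (hp.mul (isRealActivity_quarterTurn v)).im_activityZ hsymm
  rw [activityZ_withBond] at h₀ hu ⊢
  rw [mul_right_comm p, activityZ_mul_quarterTurn_mul_self]
  rw [mul_right_comm, mul_right_comm p, mul_right_comm, activityZ_mul_quarterTurn_mul_self] at hu
  have h₀re := congrArg Complex.re h₀
  have hure := congrArg Complex.re hu
  simp only [Complex.sub_re, Complex.re_ofReal_mul, Complex.neg_re, Complex.zero_re] at h₀re hure
  have hZv : activityZ w (p * quarterTurn v) = 0 := by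
    refine Complex.ext (pow_eq_zero_iff two_ne_zero |>.1 ?_) him
    have hsq : Real.sinh j * (activityZ w (p * quarterTurn u * quarterTurn v)).re ^ 2 +
        Real.sinh j * (activityZ w (p * quarterTurn v)).re ^ 2 ≤ 0 := by
      linear_combination Real.cosh j * hrayleigh -
        (activityZ w (p * quarterTurn u * quarterTurn v)).re * h₀re +
        (activityZ w (p * quarterTurn v)).re * hure
    have huv_nonneg := mul_nonneg hsinh.le
      (sq_nonneg (activityZ w (p * quarterTurn u * quarterTurn v)).re)
    have hv_nonneg := mul_nonneg hsinh.le (sq_nonneg (activityZ w (p * quarterTurn v)).re)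
    exact (mul_eq_zero.1 (by linarith)).resolve_left hsinh.ne'
  have hZu : activityZ w (p * quarterTurn u) = 0 := by
    have hcosh' : (Real.cosh j : ℂ) ≠ 0 := by exact_mod_cast hcosh.ne'
    simpa [-Complex.ofReal_cosh, hZv, hcosh'] using hu
  simp [hZv, hZu]

end Bonds

section Ising

variable {V : Type}

/-- The Boltzmann weight of the couplings `J` without external field. -/
noncomputable def isingWeight (E : Finset (Sym2 V)) (J : Sym2 V → ℝ) (σ : V → Bool) : ℝ :=
  Real.exp (∑ e ∈ E, J e * pairProd σ e)

lemma isingWeight_compl (E : Finset (Sym2 V)) (J : Sym2 V → ℝ) (σ : V → Bool) :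
    isingWeight E J σᶜ = isingWeight E J σ := by
  have hpair : ∀ e, pairProd σᶜ e = pairProd σ e := by
    rintro ⟨u, v⟩
    simp [pairProd, spin_not]
  simp only [isingWeight, hpair]

variable [DecidableEq V]

lemma isingWeight_insert {E : Finset (Sym2 V)} (J : Sym2 V → ℝ) {u v : V} (he : s(u, v) ∉ E) :
    isingWeight (insert s(u, v) E) J = withBond (isingWeight E J) u v (J s(u, v)) := by
  ext σ
  rw [isingWeight, sum_insert he, add_comm, Real.exp_add]
  rfl

variable [Fintype V] {E : Finset (Sym2 V)} {J : Sym2 V → ℝ}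

lemma isLeeYang_isingWeight (hJ : ∀ e ∈ E, 0 ≤ J e) : IsLeeYang (isingWeight E J) := by
  induction E using Finset.induction_on with
  | empty =>
    have hone : isingWeight ∅ J = 1 := by ext; simp [isingWeight]
    exact hone ▸ isLeeYang_one
  | insert e E he ih =>
    induction e with | _ u v
    rw [isingWeight_insert J he]
    exact isLeeYang_withBond (ih fun e h => hJ e (mem_insert_of_mem h)) u v
      (hJ _ (mem_insert_self _ _))

lemma activityZ_isingWeight_quarterTurn_eq_zero_of_adj (hJ : ∀ e ∈ E, 0 ≤ J e) {u v : V}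
    (hadj : (SimpleGraph.fromEdgeSet {e : Sym2 V | e ∈ E ∧ 0 < J e}).Adj u v)
    {p : V → Bool → ℂ} (hp : IsRealActivity p) (h₀ : activityZ (isingWeight E J) p = 0)
    (hu : activityZ (isingWeight E J) (p * quarterTurn u) = 0) :
    activityZ (isingWeight E J) (p * quarterTurn v) = 0 := by
  obtain ⟨⟨he, hpos⟩, -⟩ := (SimpleGraph.fromEdgeSet_adj _).1 hadj
  have hbond := isingWeight_insert J (notMem_erase s(u, v) E)
  rw [insert_erase he] at hbond
  rw [hbond] at h₀ hu ⊢
  exact activityZ_withBond_quarterTurn_eq_zero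
    (isLeeYang_isingWeight fun e h => hJ e (mem_of_mem_erase h)) (isingWeight_compl _ J) hpos hp
    h₀ hu

lemma activityZ_isingWeight_quarterTurn_eq_zero_of_preconnected (hJ : ∀ e ∈ E, 0 ≤ J e)
    (hconn : (SimpleGraph.fromEdgeSet {e : Sym2 V | e ∈ E ∧ 0 < J e}).Preconnected)
    {p : V → Bool → ℂ} (hp : IsRealActivity p) (h₀ : activityZ (isingWeight E J) p = 0) {u : V}
    (hu : activityZ (isingWeight E J) (p * quarterTurn u) = 0) (v : V) :
    activityZ (isingWeight E J) (p * quarterTurn v) = 0 := by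
  obtain ⟨walk⟩ := hconn u v
  induction walk with
  | nil => exact hu
  | cons hadj _ ih => exact ih (activityZ_isingWeight_quarterTurn_eq_zero_of_adj hJ hadj hp h₀ hu)

-- Replacing the activity at one site keeps the zero singular at that site, hence at all sites.
lemma activityZ_isingWeight_eq_zero_of_quarterTurn_eq_zero (hJ : ∀ e ∈ E, 0 ≤ J e)
    (hconn : (SimpleGraph.fromEdgeSet {e : Sym2 V | e ∈ E ∧ 0 < J e}).Preconnected)
    {p q : V → Bool → ℂ} (hp : IsRealActivity p) (hq : IsRealActivity q)
    (h₀ : activityZ (isingWeight E J) p = 0) {u : V}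
    (hu : activityZ (isingWeight E J) (p * quarterTurn u) = 0) :
    activityZ (isingWeight E J) q = 0 := by
  suffices hs : ∀ s : Finset V, activityZ (isingWeight E J) (s.piecewise q p) = 0 ∧
      ∀ v, activityZ (isingWeight E J) (s.piecewise q p * quarterTurn v) = 0 by
    simpa using (hs univ).1
  intro s
  induction s using Finset.induction_on with
  | empty =>
    simpa [h₀] using activityZ_isingWeight_quarterTurn_eq_zero_of_preconnected hJ hconn hp h₀ hu
  | insert v s _ ih =>
    obtain ⟨ih₀, ihv⟩ := ih
    have hne := fun b => (hq.piecewise hp s v b).1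
    have hins := hq.piecewise hp (insert v s)
    rw [piecewise_insert] at hins ⊢
    have hzero := activityZ_update_eq_zero hne ih₀ (ihv v)
    refine ⟨hzero _, activityZ_isingWeight_quarterTurn_eq_zero_of_preconnected (u := v) hJ hconn
      hins (hzero _) ?_⟩
    rw [quarterTurn, Pi.mulSingle, ← update_mul, mul_one]
    exact hzero _

lemma activityZ_isingWeight_one_ne_zero : activityZ (isingWeight E J) 1 ≠ 0 := by
  have hpos : 0 < ∑ σ : V → Bool, isingWeight E J σ :=
    sum_pos (fun σ _ => Real.exp_pos _) univ_nonempty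
  simp only [activityZ, Pi.one_apply, prod_const_one, mul_one]
  exact_mod_cast hpos.ne'

lemma activityZ_isingWeight_quarterTurn_ne_zero (hJ : ∀ e ∈ E, 0 ≤ J e)
    (hconn : (SimpleGraph.fromEdgeSet {e : Sym2 V | e ∈ E ∧ 0 < J e}).Preconnected)
    {p : V → Bool → ℂ} (hp : IsRealActivity p) (h₀ : activityZ (isingWeight E J) p = 0) (u : V) :
    activityZ (isingWeight E J) (p * quarterTurn u) ≠ 0 := fun hu =>
  activityZ_isingWeight_one_ne_zero
    (activityZ_isingWeight_eq_zero_of_quarterTurn_eq_zero hJ hconn hp isRealActivity_one h₀ hu)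

-- At a zero the Rayleigh inequality says that all the numbers `Z_v` have the same sign.
lemma sum_activityZ_isingWeight_quarterTurn_ne_zero (hJ : ∀ e ∈ E, 0 ≤ J e)
    (hconn : (SimpleGraph.fromEdgeSet {e : Sym2 V | e ∈ E ∧ 0 < J e}).Connected)
    {p : V → Bool → ℂ} (hp : IsRealActivity p) (h₀ : activityZ (isingWeight E J) p = 0) :
    ∑ v, activityZ (isingWeight E J) (p * quarterTurn v) ≠ 0 := by
  intro hsum
  obtain ⟨u⟩ := hconn.nonempty
  let Z' : V → ℝ := fun v => (activityZ (isingWeight E J) (p * quarterTurn v)).re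
  have hnonneg : ∀ v ∈ univ, 0 ≤ Z' u * Z' v := fun v _ => by
    simpa [h₀] using (isLeeYang_isingWeight hJ).rayleigh (isingWeight_compl E J) hp u v
  have hmul : ∑ v, Z' u * Z' v = 0 := by
    rw [← mul_sum, ← Complex.re_sum, hsum, Complex.zero_re, mul_zero]
  have hre : Z' u = 0 :=
    mul_self_eq_zero.1 ((sum_eq_zero_iff_of_nonneg hnonneg).1 hmul u (mem_univ u))
  exact activityZ_isingWeight_quarterTurn_ne_zero hJ hconn.preconnected hp h₀ u
    (Complex.ext hre ((hp.mul (isRealActivity_quarterTurn u)).im_activityZ (isingWeight_compl E J)))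

end Ising

section UniformField

variable {V : Type*} [Fintype V]

lemma prod_fieldActivity (θ : V → ℂ) (σ : V → Bool) :
    ∏ v, fieldActivity θ v (σ v) = Complex.exp (Complex.I * ∑ v, θ v * spin (σ v)) := by
  simp only [fieldActivity, ← Complex.exp_sum, mul_sum, mul_assoc]

variable [DecidableEq V]

lemma im_eq_zero_of_activityZ_fieldActivity_eq_zero {w : (V → Bool) → ℝ} (hw : IsLeeYang w)
    (hsymm : ∀ σ, w σᶜ = w σ) {x : ℂ} (hx : activityZ w (fieldActivity fun _ => x) = 0) :
    x.im = 0 := by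
  have hnot_pos : ∀ y : ℂ, activityZ w (fieldActivity fun _ => y) = 0 → ¬0 < y.im :=
    fun y hy him => hw _ (favorsMinus_fieldActivity fun _ => him) hy
  have hneg : activityZ w (fieldActivity fun _ => -x) = 0 := by
    rw [← hx, ← activityZ_comp_not hsymm]
    simp [fieldActivity, spin_not, activityZ]
  have hle := hnot_pos x hx
  have hge := hnot_pos (-x) hneg
  rw [Complex.neg_im] at hge
  linarith

lemma hasDerivAt_activityZ_fieldActivity (w : (V → Bool) → ℝ) (x : ℂ) :
    HasDerivAt (fun y => activityZ w (fieldActivity fun _ => y))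
      (∑ v, activityZ w ((fieldActivity fun _ => x) * quarterTurn v)) x := by
  simp only [activityZ, quarterTurn, prod_mul_mulSingle, prod_fieldActivity]
  rw [sum_comm]
  refine HasDerivAt.fun_sum fun σ _ => ?_
  have hexponent : HasDerivAt (fun y : ℂ => Complex.I * ∑ v, y * spin (σ v))
      (Complex.I * ∑ v, spin (σ v)) x := by
    simp only [← mul_sum]
    simpa using ((hasDerivAt_id x).mul_const (∑ v, (spin (σ v) : ℂ))).const_mul Complex.I
  refine (hexponent.cexp.const_mul (w σ : ℂ)).congr_deriv ?_
  simp only [← sum_mul, ← mul_sum]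
  push_cast
  ring

end UniformField

lemma isingZ_eq_activityZ {V : Type} [Fintype V] [DecidableEq V] {E : Finset (Sym2 V)}
    (J : Sym2 V → ℝ) {u₀ v₀ : V} (hE : s(u₀, v₀) ∈ E) (t : ℝ) (x : ℂ) :
    IsingZ E J u₀ v₀ t x =
      activityZ (isingWeight E (J + Pi.single s(u₀, v₀) t)) (fieldActivity fun _ => x) := by
  refine sum_congr rfl fun σ _ => ?_
  have henergy : ∑ e ∈ E, (J + Pi.single s(u₀, v₀) t : Sym2 V → ℝ) e * pairProd σ e =
      t * (spin (σ u₀) * spin (σ v₀)) + ∑ e ∈ E, J e * pairProd σ e := by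
    simp only [Pi.add_apply, Pi.single_apply, add_mul, sum_add_distrib, ite_mul, zero_mul,
      sum_ite_eq', hE, if_true]
    exact add_comm _ _
  rw [isingWeight, henergy, prod_fieldActivity, Complex.ofReal_exp, ← Complex.exp_add, ← mul_sum]
  push_cast
  ring_nf

theorem stmt8 {V : Type} [Fintype V] [DecidableEq V]
    (E : Finset (Sym2 V)) (J : Sym2 V → ℝ) (u₀ v₀ : V)
    (hE : s(u₀, v₀) ∈ E)
    (hferro : ∀ e ∈ E, 0 ≤ J e)
    (hconn : (SimpleGraph.fromEdgeSet {e : Sym2 V | e ∈ E ∧ 0 < J e}).Connected)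
    (t : ℝ) (ht : 0 ≤ t)
    (x : ℂ) (hx : IsingZ E J u₀ v₀ t x = 0) :
    deriv (IsingZ E J u₀ v₀ t) x ≠ 0 := by
  have hle : J ≤ J + Pi.single s(u₀, v₀) t := le_add_of_nonneg_right (Pi.single_nonneg.2 ht)
  have hferro' : ∀ e ∈ E, 0 ≤ (J + Pi.single s(u₀, v₀) t : Sym2 V → ℝ) e :=
    fun e he => (hferro e he).trans (hle e)
  have hconn' : (SimpleGraph.fromEdgeSet
      {e : Sym2 V | e ∈ E ∧ 0 < (J + Pi.single s(u₀, v₀) t : Sym2 V → ℝ) e}).Connected :=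
    hconn.mono (SimpleGraph.fromEdgeSet_mono fun e he => ⟨he.1, he.2.trans_le (hle e)⟩)
  rw [isingZ_eq_activityZ J hE] at hx
  have hx_im : x.im = 0 := im_eq_zero_of_activityZ_fieldActivity_eq_zero
    (isLeeYang_isingWeight hferro') (isingWeight_compl E _) hx
  rw [funext (isingZ_eq_activityZ J hE t), (hasDerivAt_activityZ_fieldActivity _ x).deriv]
  exact sum_activityZ_isingWeight_quarterTurn_ne_zero hferro' hconn'
    (isRealActivity_fieldActivity fun _ => hx_im) hx
end

section
/- Suppose that J is ferromagnetic, that the subgraph G_{>0} is connected, and let t ≥ 0. If n is even, then the set {x ∈ (0,π/2) : Z_{G,t}(x) = 0} has exactly n/2 elements and Z_{G,t}(π/2) ≠ 0. If n is odd, then the set {x ∈ (0,π/2) : Z_{G,t}(x) = 0} has exactly (n−1)/2 elements and Z_{G,t}(π/2) = 0. -/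
open scoped Real

/-!
The energy of a spin configuration depends only on the edges cut by its set of up spins, so up to
a nonvanishing factor `Z(x)` is the Lee–Yang polynomial `∑ S, c S * z ^ #S` at `z = exp (2 i x)`,
where `c S` is the product of the weights `exp (-2 K e) ≤ 1` of the edges `e` leaving `S`.

Give every vertex its own variable and single out one variable `w`: by spin-flip symmetry the
polynomial is `B + w * R`, where `R` is the conjugate reversal of `B`. As `|R| = |B|` on the torus,
the maximum principle gives `|R| ≤ |B|` on the polydisc as long as `B` has no zeros inside, hence
`(1 - |w|) * |B| ≤ |B + w * R|`. Inductively there are no zeros in the open polydisc; for connected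
couplings, freezing one spin damps the neighbouring variables, so that `B` has no zeros even in the
closed polydisc. On the diagonal, `(1 - |z|) * |B| ≤ |P z|` with `B` zero-free is incompatible with
a multiple zero of `P` on the circle. Thus `P` has `n` distinct zeros on the unit circle. As the
coefficients are positive, the zeros are permuted by conjugation and avoid `1`, so that `n / 2` of
them lie in the open upper half plane and `-1` is a zero exactly when `n` is odd.
-/

section LeeYang

open Finset Function Polynomial
open scoped ComplexConjugate

theorem rootMultiplicity_le_one_of_one_sub_norm_mul_le {p : ℂ[X]} {B : ℂ → ℂ} (hB : Continuous B)
    (hBp : ∀ w, ‖w‖ < 1 → (1 - ‖w‖) * ‖B w‖ ≤ ‖p.eval w‖) {z : ℂ} (hz : ‖z‖ = 1)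
    (hBz : B z ≠ 0) : p.rootMultiplicity z ≤ 1 := by
  by_contra! hmult
  obtain ⟨q, rfl⟩ : (X - C z) ^ 2 ∣ p :=
    (pow_dvd_pow _ hmult).trans (pow_rootMultiplicity_dvd _ _)
  have hradial : ∀ r ∈ Set.Ioo (0 : ℝ) 1, ‖B (r * z)‖ ≤ (1 - r) * ‖q.eval (r * z)‖ := by
    intro r ⟨hr0, hr1⟩
    have hnorm : ‖(r : ℂ) * z‖ = r := by simp [hz, abs_of_pos hr0]
    have hdist : ‖(r : ℂ) * z - z‖ = 1 - r := by
      rw [← sub_one_mul, norm_mul, hz, mul_one, norm_sub_rev]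
      exact_mod_cast Real.norm_of_nonneg (sub_nonneg.2 hr1.le)
    have hle := hBp (r * z) (hnorm.trans_lt hr1)
    simp only [sq, eval_mul, eval_sub, eval_X, eval_C, norm_mul, hnorm, hdist,
      mul_assoc] at hle
    exact le_of_mul_le_mul_left hle (sub_pos.2 hr1)
  have hlim : ‖B ((1 : ℝ) * z)‖ ≤ (1 - 1) * ‖q.eval ((1 : ℝ) * z)‖ := by
    refine ContinuousWithinAt.closure_le (s := Set.Ioo (0 : ℝ) 1)
      (f := fun r : ℝ => ‖B (r * z)‖) (g := fun r : ℝ => (1 - r) * ‖q.eval (r * z)‖)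
      (by simp [closure_Ioo]) ?_ ?_ hradial <;>
    exact Continuous.continuousWithinAt (by fun_prop)
  exact hBz (by simpa using hlim)

section Circle

variable {R : Finset ℂ}

theorem card_filter_im_neg_eq (hconj : ∀ z ∈ R, conj z ∈ R) :
    #{z ∈ R | z.im < 0} = #{z ∈ R | 0 < z.im} := by
  refine card_nbij' conj conj ?_ ?_ (fun z _ => Complex.conj_conj z)
    (fun z _ => Complex.conj_conj z) <;>
  · simp only [coe_filter, Set.MapsTo, Set.mem_ofPred_eq]
    exact fun z hz => ⟨hconj z hz.1, by simpa using hz.2⟩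

theorem filter_im_eq_zero (hnorm : ∀ z ∈ R, ‖z‖ = 1) (hone : 1 ∉ R) :
    {z ∈ R | z.im = 0} = {z ∈ R | z = -1} := by
  refine filter_congr fun z hz => ⟨fun him => ?_, fun h => by simp [h]⟩
  obtain ⟨r, rfl⟩ : ∃ r : ℝ, (r : ℂ) = z := ⟨z.re, Complex.ext rfl (by simp [him])⟩
  have habs : |r| = 1 := by simpa using hnorm r hz
  rcases (abs_eq zero_le_one).1 habs with rfl | rfl
  · exact absurd (by simpa using hz) hone
  · simp

theorem card_eq_two_mul_card_filter_im_pos_add (hnorm : ∀ z ∈ R, ‖z‖ = 1) (hone : 1 ∉ R)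
    (hconj : ∀ z ∈ R, conj z ∈ R) :
    #R = 2 * #{z ∈ R | 0 < z.im} + if -1 ∈ R then 1 else 0 := by
  have hreal : #{z ∈ R | z.im = 0} = if -1 ∈ R then 1 else 0 := by
    rw [filter_im_eq_zero hnorm hone, filter_eq' R (-1)]
    split_ifs <;> simp
  have hnonpos : #{z ∈ R | ¬ 0 < z.im} = #{z ∈ R | z.im < 0} + #{z ∈ R | z.im = 0} := by
    rw [← card_union_of_disjoint (disjoint_filter.2 fun z _ hz => hz.ne), ← filter_or]
    simp only [not_lt, le_iff_lt_or_eq]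
  rw [← card_filter_add_card_filter_not (s := R) (fun z => 0 < z.im), hnonpos,
    card_filter_im_neg_eq hconj, hreal]
  ring

theorem card_filter_im_pos (hnorm : ∀ z ∈ R, ‖z‖ = 1) (hone : 1 ∉ R)
    (hconj : ∀ z ∈ R, conj z ∈ R) : #{z ∈ R | 0 < z.im} = #R / 2 := by
  rw [card_eq_two_mul_card_filter_im_pos_add hnorm hone hconj]
  split_ifs <;> lia

theorem neg_one_mem_iff_odd_card (hnorm : ∀ z ∈ R, ‖z‖ = 1) (hone : 1 ∉ R)
    (hconj : ∀ z ∈ R, conj z ∈ R) : -1 ∈ R ↔ Odd #R := by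
  rw [card_eq_two_mul_card_filter_im_pos_add hnorm hone hconj]
  split_ifs with hmem <;> simp [hmem, parity_simps]

theorem encard_setOf_exp_two_mul_I_mem (hnorm : ∀ z ∈ R, ‖z‖ = 1) :
    {x : ℝ | x ∈ Set.Ioo 0 (π / 2) ∧ Complex.exp (2 * x * Complex.I) ∈ R}.encard
      = #{z ∈ R | 0 < z.im} := by
  have hcast : ∀ x : ℝ, (2 * x * Complex.I : ℂ) = ((2 * x : ℝ) : ℂ) * Complex.I := by simp
  rw [← Set.encard_coe_eq_coe_finsetCard]
  refine Set.encard_congr <| Set.BijOn.equiv (fun x : ℝ => Complex.exp (2 * x * Complex.I)) <|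
    Set.InvOn.bijOn (f' := fun z => z.arg / 2) ⟨?_, ?_⟩ ?_ ?_
  · rintro x ⟨⟨hx0, hx1⟩, -⟩
    beta_reduce
    rw [hcast, Complex.arg_exp_mul_I, (toIocMod_eq_self _).2 ⟨by linarith, by linarith⟩]
    ring
  · intro z hz
    have hpolar := Complex.norm_mul_exp_arg_mul_I z
    rw [hnorm z (mem_filter.1 hz).1, Complex.ofReal_one, one_mul] at hpolar
    beta_reduce
    rw [hcast, mul_div_cancel₀ _ two_ne_zero, hpolar]
  · rintro x ⟨⟨hx0, hx1⟩, hx⟩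
    refine mem_filter.2 ⟨hx, ?_⟩
    beta_reduce
    rw [hcast, Complex.exp_ofReal_mul_I_im]
    exact Real.sin_pos_of_pos_of_lt_pi (by linarith) (by linarith)
  · intro z hz
    obtain ⟨hzR, him⟩ := mem_filter.1 hz
    have harg0 : 0 < z.arg :=
      (Complex.arg_nonneg_iff.2 him.le).lt_of_ne' fun h0 => him.ne' (Complex.arg_eq_zero_iff.1 h0).2
    have hargpi : z.arg < π := Complex.arg_lt_pi_iff.2 (Or.inr him.ne')
    refine ⟨⟨by linarith, by linarith⟩, ?_⟩
    have hpolar := Complex.norm_mul_exp_arg_mul_I z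
    rw [hnorm z hzR, Complex.ofReal_one, one_mul] at hpolar
    beta_reduce
    rwa [hcast, mul_div_cancel₀ _ two_ne_zero, hpolar]

end Circle

variable {ι : Type*}

section Polydisc

/-- The multiaffine polynomial in the variables `z i`, `i ∈ T`, in which the monomial
`∏ i ∈ S, z i` has coefficient `c S`; only the values of `c` on the subsets of `T` matter. -/
def multiaffine (T : Finset ι) (c : Finset ι → ℂ) (z : ι → ℂ) : ℂ :=
  ∑ S ∈ T.powerset, c S * ∏ i ∈ S, z i

variable [DecidableEq ι]

theorem norm_le_of_forall_torus_norm_le {F : Type*} [NormedAddCommGroup F] [NormedSpace ℂ F]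
    {T : Finset ι} {f : (ι → ℂ) → F} {C : ℝ}
    (hf : ∀ z, (∀ i ∈ T, ‖z i‖ ≤ 1) → ∀ i ∈ T,
      DiffContOnCl ℂ (fun ζ => f (update z i ζ)) (Metric.ball 0 1))
    (hC : ∀ z, (∀ i ∈ T, ‖z i‖ = 1) → ‖f z‖ ≤ C) {z : ι → ℂ} (hz : ∀ i ∈ T, ‖z i‖ ≤ 1) :
    ‖f z‖ ≤ C := by
  induction hs : {i ∈ T | ‖z i‖ ≠ 1} using Finset.strongInduction generalizing z with
  | H s ih =>
    by_cases htorus : ∀ i ∈ T, ‖z i‖ = 1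
    · exact hC z htorus
    push Not at htorus
    obtain ⟨i, hiT, hi⟩ := htorus
    rw [← update_eq_self i z]
    refine Complex.norm_le_of_forall_mem_frontier_norm_le Metric.isBounded_ball (hf z hz i hiT)
      (fun ζ hζ => ?_) (by simpa [closure_ball] using hz i hiT)
    have hζ : ‖ζ‖ = 1 := by simpa [frontier_ball] using hζ
    refine ih {j ∈ T | ‖update z i ζ j‖ ≠ 1} ?_ ?_ rfl
    · rw [← hs, ssubset_iff_of_subset]
      · exact ⟨i, by simp [hiT, hi], by simp [hζ]⟩
      · intro j hj
        rcases eq_or_ne j i with rfl | hji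
        · simp [hζ] at hj
        · simpa [hji] using hj
    · exact (forall_update_iff z fun j w => j ∈ T → ‖w‖ ≤ 1).2
        ⟨fun _ => hζ.le, fun j _ => hz j⟩

/-- The coefficients of the polynomial obtained from `multiaffine T c` by the inversion
`z i ↦ (conj (z i))⁻¹` of every variable, see `multiaffine_conjReverse`. -/
def conjReverse (T : Finset ι) (c : Finset ι → ℂ) (S : Finset ι) : ℂ :=
  conj (c (T \ S))

/-- Self-inversive polynomials: `multiaffine T c` has the same coefficients as its conjugate
reversal. Only the subsets of `T` are constrained, as the other values of `c` do not matter. -/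
def IsSelfInversive (T : Finset ι) (c : Finset ι → ℂ) : Prop :=
  ∀ S ⊆ T, conjReverse T c S = c S

variable {T : Finset ι} {c d : Finset ι → ℂ} {v : ι} {z : ι → ℂ}

theorem IsSelfInversive.multiaffine_conjReverse_eq (hc : IsSelfInversive T c) :
    multiaffine T (conjReverse T c) z = multiaffine T c z :=
  sum_congr rfl fun S hS => by rw [hc S (mem_powerset.1 hS)]

theorem multiaffine_conjReverse (hz : ∀ i ∈ T, z i ≠ 0) :
    multiaffine T (conjReverse T c) z
      = (∏ i ∈ T, z i) * conj (multiaffine T c fun i => (conj (z i))⁻¹) := by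
  rw [multiaffine, multiaffine, map_sum, mul_sum]
  refine sum_nbij' (T \ ·) (T \ ·) (by simp) (by simp)
    (fun S hS => Finset.sdiff_sdiff_eq_self (mem_powerset.1 hS))
    (fun S hS => Finset.sdiff_sdiff_eq_self (mem_powerset.1 hS)) fun S hS => ?_
  have hne : ∏ i ∈ T \ S, z i ≠ 0 := prod_ne_zero_iff.2 fun i hi => hz i (mem_sdiff.1 hi).1
  rw [← prod_sdiff (mem_powerset.1 hS), map_mul, map_prod, conjReverse]
  simp only [map_inv₀, Complex.conj_conj, prod_inv_distrib]
  field_simp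

theorem norm_multiaffine_conjReverse_of_norm_eq_one (hz : ∀ i ∈ T, ‖z i‖ = 1) :
    ‖multiaffine T (conjReverse T c) z‖ = ‖multiaffine T c z‖ := by
  have hinv : multiaffine T c (fun i => (conj (z i))⁻¹) = multiaffine T c z :=
    sum_congr rfl fun S hS => congrArg _ <| prod_congr rfl fun i hi => by
      beta_reduce
      rw [← map_inv₀, Complex.inv_eq_conj (hz i (mem_powerset.1 hS hi)), Complex.conj_conj]
  rw [multiaffine_conjReverse fun i hi => norm_ne_zero_iff.1 (by simp [hz i hi]), norm_mul,
    norm_prod, prod_eq_one hz, one_mul, RCLike.norm_conj, hinv]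

theorem norm_multiaffine_conjReverse_le_of_closed
    (hne : ∀ z : ι → ℂ, (∀ i ∈ T, ‖z i‖ ≤ 1) → multiaffine T c z ≠ 0)
    (hz : ∀ i ∈ T, ‖z i‖ ≤ 1) :
    ‖multiaffine T (conjReverse T c) z‖ ≤ ‖multiaffine T c z‖ := by
  have hquot : ‖multiaffine T (conjReverse T c) z / multiaffine T c z‖ ≤ 1 := by
    refine norm_le_of_forall_torus_norm_le (T := T)
      (f := fun z => multiaffine T (conjReverse T c) z / multiaffine T c z)
      (fun z hz i _ => ?_) (fun z hz => ?_) hz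
    · have hcoord : ∀ j, Differentiable ℂ fun ζ : ℂ => update z i ζ j := fun j => by
        rcases eq_or_ne j i with rfl | hji
        · simp
        · simp [hji]
      have hdiff : ∀ d, Differentiable ℂ fun ζ => multiaffine T d (update z i ζ) := fun d => by
        unfold multiaffine
        fun_prop
      refine DifferentiableOn.diffContOnCl <|
        (hdiff _).differentiableOn.div (hdiff _).differentiableOn fun ζ hζ => hne _ ?_
      rw [closure_ball _ one_ne_zero, mem_closedBall_zero_iff] at hζ
      exact (forall_update_iff z fun j w => j ∈ T → ‖w‖ ≤ 1).2
        ⟨fun _ => hζ, fun j _ => hz j⟩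
    · rw [norm_div, norm_multiaffine_conjReverse_of_norm_eq_one hz]
      exact div_self_le_one _
  rwa [norm_div, div_le_one (norm_pos_iff.2 (hne z hz))] at hquot

theorem norm_multiaffine_conjReverse_le
    (hne : ∀ z : ι → ℂ, (∀ i ∈ T, ‖z i‖ < 1) → multiaffine T c z ≠ 0)
    (hz : ∀ i ∈ T, ‖z i‖ ≤ 1) :
    ‖multiaffine T (conjReverse T c) z‖ ≤ ‖multiaffine T c z‖ := by
  let dilate (r : ℝ) (S : Finset ι) : ℂ := (r : ℂ) ^ #S * c S
  have hdilate : ∀ r z, multiaffine T (dilate r) z = multiaffine T c fun i => r * z i := by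
    intro r z
    simp only [multiaffine, dilate, prod_mul_distrib, prod_const]
    exact sum_congr rfl fun S _ => by ring
  have hlt : ∀ r ∈ Set.Ioo (0 : ℝ) 1,
      ‖multiaffine T (conjReverse T (dilate r)) z‖ ≤ ‖multiaffine T (dilate r) z‖ := by
    refine fun r hr => norm_multiaffine_conjReverse_le_of_closed (fun y hy => ?_) hz
    rw [hdilate]
    refine hne _ fun i hi => ?_
    rw [norm_mul, Complex.norm_of_nonneg hr.1.le]
    exact mul_lt_one_of_nonneg_of_lt_one_left hr.1.le hr.2 (hy i hi)
  have hlim : ‖multiaffine T (conjReverse T (dilate 1)) z‖ ≤ ‖multiaffine T (dilate 1) z‖ := by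
    refine ContinuousWithinAt.closure_le (s := Set.Ioo (0 : ℝ) 1)
      (f := fun r => ‖multiaffine T (conjReverse T (dilate r)) z‖)
      (g := fun r => ‖multiaffine T (dilate r) z‖) (by simp [closure_Ioo]) ?_ ?_ hlt <;>
    · simp only [multiaffine, conjReverse, dilate]
      exact Continuous.continuousWithinAt (by fun_prop)
  have hone : dilate 1 = c := by ext S; simp [dilate]
  rwa [hone] at hlim

theorem IsSelfInversive.multiaffine_insert (hc : IsSelfInversive (insert v T) c) (hv : v ∉ T) :
    multiaffine (insert v T) c z
      = multiaffine T c z + z v * multiaffine T (conjReverse T c) z := by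
  simp only [multiaffine]
  rw [sum_powerset_insert hv, mul_sum]
  refine congrArg _ (sum_congr rfl fun S hS => ?_)
  have hST := mem_powerset.1 hS
  rw [prod_insert (fun h => hv (hST h)), ← hc (insert v S) (insert_subset_insert v hST),
    conjReverse, conjReverse, insert_sdiff_insert, sdiff_insert_of_notMem hv]
  ring

theorem IsSelfInversive.one_sub_norm_mul_norm_le (hc : IsSelfInversive (insert v T) c)
    (hv : v ∉ T) (hne : ∀ z : ι → ℂ, (∀ i ∈ T, ‖z i‖ < 1) → multiaffine T c z ≠ 0)
    (hz : ∀ i ∈ T, ‖z i‖ ≤ 1) :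
    (1 - ‖z v‖) * ‖multiaffine T c z‖ ≤ ‖multiaffine (insert v T) c z‖ := by
  calc (1 - ‖z v‖) * ‖multiaffine T c z‖
      = ‖multiaffine T c z‖ - ‖z v‖ * ‖multiaffine T c z‖ := by ring
    _ ≤ ‖multiaffine T c z‖ - ‖z v * multiaffine T (conjReverse T c) z‖ := by
        rw [norm_mul]
        gcongr
        exact norm_multiaffine_conjReverse_le hne hz
    _ ≤ ‖multiaffine T c z + z v * multiaffine T (conjReverse T c) z‖ :=
        norm_sub_le_norm_add _ _
    _ = ‖multiaffine (insert v T) c z‖ := by rw [hc.multiaffine_insert hv]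

end Polydisc

section CutCoeff

variable [DecidableEq ι] {A : Matrix ι ι ℂ} {T : Finset ι} {z : ι → ℂ}

/-- The Lee–Yang coefficient of the set `S ⊆ T` of up spins: the product of the entries of `A`
over the ordered pairs leading from `S` to `T \ S`. -/
def cutCoeff (A : Matrix ι ι ℂ) (T S : Finset ι) : ℂ :=
  ∏ i ∈ S, ∏ j ∈ T \ S, A i j

theorem isSelfInversive_cutCoeff (hA : A.IsHermitian) (T : Finset ι) :
    IsSelfInversive T (cutCoeff A T) := by
  intro S hS
  simp only [conjReverse, cutCoeff, Finset.sdiff_sdiff_eq_self hS, map_prod]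
  rw [prod_comm]
  exact prod_congr rfl fun i _ => prod_congr rfl fun j _ => hA.apply i j

theorem multiaffine_cutCoeff_insert {v : ι} (hv : v ∉ T) :
    multiaffine T (cutCoeff A (insert v T)) z
      = multiaffine T (cutCoeff A T) fun i => A i v * z i := by
  refine sum_congr rfl fun S hS => ?_
  have hvS : v ∉ S := fun h => hv (mem_powerset.1 hS h)
  have hrow : ∀ i, ∏ j ∈ insert v T \ S, A i j = A i v * ∏ j ∈ T \ S, A i j := fun i => by
    rw [insert_sdiff_of_notMem _ hvS, prod_insert (fun h => hv (mem_sdiff.1 h).1)]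
  simp only [cutCoeff, hrow, prod_mul_distrib]
  ring

theorem norm_eq_one_and_norm_eq_one_of_norm_mul {a b : ℂ} (ha : ‖a‖ ≤ 1) (hb : ‖b‖ ≤ 1)
    (hab : ‖a * b‖ = 1) : ‖a‖ = 1 ∧ ‖b‖ = 1 := by
  rw [norm_mul] at hab
  constructor <;> nlinarith [norm_nonneg a, norm_nonneg b]

theorem exists_norm_lt_one_of_forall_norm_mul_eq_one {S : Finset ι} {v : ι}
    (hA1 : ∀ i j, ‖A i j‖ ≤ 1) (hz : ∀ i ∈ S, ‖z i‖ ≤ 1) (hS : ∀ i ∈ S, ‖A i v * z i‖ = 1)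
    (hcut : (∀ i ∈ S, ‖z i‖ = 1) → ∃ i ∈ S, ∃ j ∈ insert v T \ S, ‖A i j‖ < 1) :
    ∃ i ∈ S, ∃ j ∈ T \ S, ‖A i j‖ < 1 := by
  have hunit := fun i hi => norm_eq_one_and_norm_eq_one_of_norm_mul (hA1 i v) (hz i hi) (hS i hi)
  obtain ⟨i, hi, j, hj, hij⟩ := hcut fun i hi => (hunit i hi).2
  rw [mem_sdiff, mem_insert] at hj
  rcases hj with ⟨rfl | hj, hjS⟩
  · exact absurd (hunit i hi).1 hij.ne
  · exact ⟨i, hi, j, mem_sdiff.2 ⟨hj, hjS⟩, hij⟩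

theorem multiaffine_cutCoeff_ne_zero (hA : A.IsHermitian) (hA1 : ∀ i j, ‖A i j‖ ≤ 1)
    (hz : ∀ i ∈ T, ‖z i‖ ≤ 1)
    (hcut : ∀ S ⊆ T, S.Nonempty → (∀ i ∈ S, ‖z i‖ = 1) → ∃ i ∈ S, ∃ j ∈ T \ S, ‖A i j‖ < 1) :
    multiaffine T (cutCoeff A T) z ≠ 0 := by
  induction hn : #T generalizing T z with
  | zero => simp [card_eq_zero.1 hn, multiaffine, cutCoeff]
  | succ n ih =>
    obtain ⟨v, hvT, hzv⟩ : ∃ v ∈ T, ‖z v‖ < 1 := by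
      by_contra! hge
      have hT : T.Nonempty := card_pos.1 (by lia)
      simpa using hcut T Subset.rfl hT fun i hi => (hz i hi).antisymm (hge i hi)
    obtain ⟨T, hv, rfl⟩ : ∃ T', v ∉ T' ∧ insert v T' = T :=
      ⟨T.erase v, notMem_erase v T, insert_erase hvT⟩
    have hcard : #T = n := by simpa [hv] using hn
    -- Setting `z v = 0` multiplies the other variables by the entries `A i v`, which pushes the
    -- neighbours of `v` into the open disc.
    have hfrozen : ∀ y : ι → ℂ, (∀ i ∈ T, ‖y i‖ ≤ 1) →
        (∀ S ⊆ T, S.Nonempty → (∀ i ∈ S, ‖y i‖ = 1) →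
          ∃ i ∈ S, ∃ j ∈ insert v T \ S, ‖A i j‖ < 1) →
        multiaffine T (cutCoeff A (insert v T)) y ≠ 0 := by
      intro y hy hycut
      rw [multiaffine_cutCoeff_insert hv]
      refine ih (fun i hi => ?_) (fun S hS hne hS1 => ?_) hcard
      · rw [norm_mul]
        exact mul_le_one₀ (hA1 _ _) (norm_nonneg _) (hy i hi)
      · exact exists_norm_lt_one_of_forall_norm_mul_eq_one hA1 (fun i hi => hy i (hS hi)) hS1
          (hycut S hS hne)
    have hopen : ∀ y : ι → ℂ, (∀ i ∈ T, ‖y i‖ < 1) →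
        multiaffine T (cutCoeff A (insert v T)) y ≠ 0 := fun y hy =>
      hfrozen y (fun i hi => (hy i hi).le) fun S hS ⟨i, hi⟩ hS1 =>
        absurd (hS1 i hi) (hy i (hS hi)).ne
    have hz' : ∀ i ∈ T, ‖z i‖ ≤ 1 := fun i hi => hz i (mem_insert_of_mem hi)
    have hpos : 0 < ‖multiaffine T (cutCoeff A (insert v T)) z‖ :=
      norm_pos_iff.2 (hfrozen z hz' fun S hS => hcut S (hS.trans (subset_insert v T)))
    have hbound := (isSelfInversive_cutCoeff hA _).one_sub_norm_mul_norm_le hv hopen hz'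
    exact norm_pos_iff.1 ((mul_pos (sub_pos.2 hzv) hpos).trans_le hbound)

end CutCoeff

section Diagonal

variable [Fintype ι] {c : Finset ι → ℂ} {z : ℂ}

/-- The univariate polynomial obtained from `multiaffine univ c` by equating all variables. -/
noncomputable def diagonalPoly (c : Finset ι → ℂ) : ℂ[X] :=
  ∑ S, C (c S) * X ^ #S

theorem eval_diagonalPoly (c : Finset ι → ℂ) (z : ℂ) :
    (diagonalPoly c).eval z = multiaffine univ c fun _ => z := by
  simp [diagonalPoly, multiaffine, eval_finsetSum]

theorem coeff_diagonalPoly_card (c : Finset ι → ℂ) :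
    (diagonalPoly c).coeff (Fintype.card ι) = c univ := by
  classical
  simp only [diagonalPoly, finsetSum_coeff, coeff_C_mul_X_pow, eq_comm (a := Fintype.card ι),
    card_eq_iff_eq_univ]
  simp

theorem natDegree_diagonalPoly (hc : c univ ≠ 0) :
    (diagonalPoly c).natDegree = Fintype.card ι := by
  refine natDegree_eq_of_le_of_coeff_ne_zero ?_ (by rwa [coeff_diagonalPoly_card])
  exact natDegree_sum_le_of_forall_le _ _ fun S _ =>
    (natDegree_C_mul_X_pow_le _ _).trans (card_le_univ S)

variable [DecidableEq ι]

/-- The conclusion of the strict Lee–Yang theorem: the polynomial `multiaffine univ c` is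
self-inversive and all its zeros in the closed unit polydisc lie on the unit torus. -/
structure IsStrictLeeYang (c : Finset ι → ℂ) : Prop where
  isSelfInversive : IsSelfInversive univ c
  multiaffine_ne_zero : ∀ z : ι → ℂ, (∀ i, ‖z i‖ ≤ 1) → (∃ i, ‖z i‖ < 1) →
    multiaffine univ c z ≠ 0

theorem isStrictLeeYang_cutCoeff {A : Matrix ι ι ℂ} (hA : A.IsHermitian)
    (hA1 : ∀ i j, ‖A i j‖ ≤ 1) (hconn : (SimpleGraph.fromRel fun i j => ‖A i j‖ < 1).Connected) :
    IsStrictLeeYang (cutCoeff A univ) where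
  isSelfInversive := isSelfInversive_cutCoeff hA univ
  multiaffine_ne_zero z hz := by
    rintro ⟨v, hv⟩
    refine multiaffine_cutCoeff_ne_zero hA hA1 (fun i _ => hz i) fun S _ ⟨u, hu⟩ hS1 => ?_
    have hvS : v ∉ S := fun h => hv.ne (hS1 v h)
    obtain ⟨p⟩ := hconn.preconnected u v
    obtain ⟨d, -, hfst, hsnd⟩ := p.exists_boundary_dart (S : Set ι) hu hvS
    have hnorm : ‖A d.snd d.fst‖ = ‖A d.fst d.snd‖ := by rw [← hA.apply, norm_star]
    have hlt : ‖A d.fst d.snd‖ < 1 := by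
      simpa [hnorm] using ((SimpleGraph.fromRel_adj _ _ _).1 d.adj).2
    exact ⟨d.fst, hfst, d.snd, by simpa using hsnd, hlt⟩

namespace IsStrictLeeYang

variable [Nonempty ι]

theorem apply_univ_ne_zero (h : IsStrictLeeYang c) : c univ ≠ 0 := by
  have hempty : multiaffine univ c (fun _ => 0) = c ∅ := by
    simp only [multiaffine, prod_const]
    simp [zero_pow_eq]
  rw [← h.isSelfInversive univ Subset.rfl, conjReverse, Finset.sdiff_self, ← hempty]
  simpa using h.multiaffine_ne_zero (fun _ => 0) (by simp) (by simp)

theorem diagonalPoly_ne_zero (h : IsStrictLeeYang c) : diagonalPoly c ≠ 0 := fun h0 =>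
  h.apply_univ_ne_zero (by rw [← coeff_diagonalPoly_card c, h0, coeff_zero])

theorem norm_eq_one_of_isRoot (h : IsStrictLeeYang c) (hz : (diagonalPoly c).IsRoot z) :
    ‖z‖ = 1 := by
  have hdisc : ∀ y : ℂ, ‖y‖ < 1 → multiaffine univ c (fun _ => y) ≠ 0 := fun y hy =>
    h.multiaffine_ne_zero _ (fun _ => hy.le) ⟨Classical.arbitrary ι, hy⟩
  rw [IsRoot, eval_diagonalPoly] at hz
  refine le_antisymm ?_ (not_lt.1 fun hlt => hdisc z hlt hz)
  by_contra! hgt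
  have hz0 : z ≠ 0 := norm_pos_iff.1 (zero_lt_one.trans hgt)
  rw [← h.isSelfInversive.multiaffine_conjReverse_eq, multiaffine_conjReverse fun _ _ => hz0,
    mul_eq_zero, map_eq_zero] at hz
  refine hz.elim (prod_ne_zero_iff.2 fun _ _ => hz0) (hdisc _ ?_)
  rw [norm_inv, RCLike.norm_conj]
  exact inv_lt_one_of_one_lt₀ hgt

theorem rootMultiplicity_le_one (h : IsStrictLeeYang c) (hz : ‖z‖ = 1) :
    (diagonalPoly c).rootMultiplicity z ≤ 1 := by
  let v := Classical.arbitrary ι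
  obtain ⟨T, hv, huniv⟩ : ∃ T : Finset ι, v ∉ T ∧ insert v T = univ :=
    ⟨univ.erase v, notMem_erase v univ, insert_erase (mem_univ v)⟩
  have hc : IsSelfInversive (insert v T) c := huniv ▸ h.isSelfInversive
  have hne : ∀ y : ι → ℂ, (∀ i ∈ T, ‖y i‖ ≤ 1) →
      multiaffine T c y ≠ 0 := by
    intro y hy
    have hfreeze : multiaffine univ c (update y v 0) = multiaffine T c y := by
      rw [← huniv, hc.multiaffine_insert hv, update_self, zero_mul, add_zero]
      refine sum_congr rfl fun S hS => congrArg _ (prod_congr rfl fun i hi => ?_)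
      exact update_of_ne (ne_of_mem_of_not_mem (mem_powerset.1 hS hi) hv) _ _
    rw [← hfreeze]
    refine h.multiaffine_ne_zero _ ?_ ⟨v, by simp⟩
    refine (forall_update_iff y fun _ w => ‖w‖ ≤ 1).2 ⟨by simp, fun i hi => hy i (?_)⟩
    exact mem_of_mem_insert_of_ne (huniv ▸ mem_univ i) hi
  refine rootMultiplicity_le_one_of_one_sub_norm_mul_le
    (B := fun w => multiaffine T c fun _ => w) ?_ (fun w hw => ?_) hz
    (hne _ fun _ _ => hz.le)
  · simp only [multiaffine, prod_const]
    fun_prop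
  · have hbound := hc.one_sub_norm_mul_norm_le hv (fun y hy => hne y fun i hi => (hy i hi).le)
      (z := fun _ => w) fun _ _ => hw.le
    rwa [huniv, ← eval_diagonalPoly] at hbound

theorem card_roots_toFinset (h : IsStrictLeeYang c) :
    #(diagonalPoly c).roots.toFinset = Fintype.card ι := by
  have hnodup : (diagonalPoly c).roots.Nodup := by
    refine Multiset.nodup_iff_count_le_one.2 fun z => ?_
    rw [count_roots]
    by_cases hz : (diagonalPoly c).IsRoot z
    · exact h.rootMultiplicity_le_one (h.norm_eq_one_of_isRoot hz)
    · exact (rootMultiplicity_eq_zero hz).trans_le zero_le_one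
  rw [Multiset.toFinset_card_of_nodup hnodup, IsAlgClosed.card_roots_eq_natDegree,
    natDegree_diagonalPoly h.apply_univ_ne_zero]

end IsStrictLeeYang

end Diagonal

section RealCoefficients

open scoped ComplexOrder

variable [Fintype ι] {c : Finset ι → ℂ} {z : ℂ}

theorem eval_conj_diagonalPoly (hc : ∀ S, conj (c S) = c S) (z : ℂ) :
    (diagonalPoly c).eval (conj z) = conj ((diagonalPoly c).eval z) := by
  simp [diagonalPoly, eval_finsetSum, hc]

theorem conj_mem_roots_toFinset (hc : ∀ S, 0 < c S)
    (hz : z ∈ (diagonalPoly c).roots.toFinset) : conj z ∈ (diagonalPoly c).roots.toFinset := by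
  have hreal : ∀ S, conj (c S) = c S := fun S =>
    Complex.conj_eq_iff_im.2 (Complex.pos_iff.1 (hc S)).2.symm
  simp_all [eval_conj_diagonalPoly hreal]

theorem eval_one_diagonalPoly_ne_zero (hc : ∀ S, 0 < c S) : (diagonalPoly c).eval 1 ≠ 0 := by
  simp only [diagonalPoly, eval_finsetSum, eval_mul, eval_C, eval_pow, eval_X, one_pow, mul_one]
  exact (sum_pos (fun S _ => hc S) univ_nonempty).ne'

namespace IsStrictLeeYang

variable [DecidableEq ι] [Nonempty ι]

theorem encard_setOf_eval_exp_two_mul_I_eq_zero (h : IsStrictLeeYang c) (hc : ∀ S, 0 < c S) :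
    {x : ℝ | x ∈ Set.Ioo 0 (π / 2) ∧
      (diagonalPoly c).eval (Complex.exp (2 * x * Complex.I)) = 0}.encard
      = (Fintype.card ι / 2 : ℕ) := by
  have hmem : ∀ z, z ∈ (diagonalPoly c).roots.toFinset ↔ (diagonalPoly c).eval z = 0 := by
    simp [h.diagonalPoly_ne_zero]
  have hnorm := fun z hz => h.norm_eq_one_of_isRoot ((hmem z).1 hz)
  simp only [← hmem]
  rw [encard_setOf_exp_two_mul_I_mem hnorm, card_filter_im_pos hnorm
    (mt (hmem 1).1 (eval_one_diagonalPoly_ne_zero hc)) fun z => conj_mem_roots_toFinset hc,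
    h.card_roots_toFinset]

theorem eval_neg_one_eq_zero_iff_odd_card (h : IsStrictLeeYang c) (hc : ∀ S, 0 < c S) :
    (diagonalPoly c).eval (-1) = 0 ↔ Odd (Fintype.card ι) := by
  have hmem : ∀ z, z ∈ (diagonalPoly c).roots.toFinset ↔ (diagonalPoly c).eval z = 0 := by
    simp [h.diagonalPoly_ne_zero]
  rw [← hmem, ← h.card_roots_toFinset, neg_one_mem_iff_odd_card
    (fun z hz => h.norm_eq_one_of_isRoot ((hmem z).1 hz))
    (mt (hmem 1).1 (eval_one_diagonalPoly_ne_zero hc)) fun z => conj_mem_roots_toFinset hc]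

end IsStrictLeeYang

end RealCoefficients

section Ising

open scoped ComplexOrder

variable {V : Type}

theorem pairProd_mk_eq_neg_one_iff {σ : V → Bool} {i j : V} :
    pairProd σ s(i, j) = -1 ↔ σ i ≠ σ j := by
  cases hi : σ i <;> cases hj : σ j <;> norm_num [pairProd, spin, hi, hj]

theorem pairProd_eq_one_of_ne_neg_one {σ : V → Bool} {e : Sym2 V} (he : pairProd σ e ≠ -1) :
    pairProd σ e = 1 := by
  induction e using Sym2.ind with
  | _ i j => cases hi : σ i <;> cases hj : σ j <;> simp_all [pairProd, spin]

theorem sum_spin [Fintype V] (σ : V → Bool) :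
    ∑ u, spin (σ u) = 2 * #{i | σ i} - Fintype.card V := by
  have hspin : ∀ u, spin (σ u) = 2 * (if σ u then 1 else 0) - 1 := fun u => by
    unfold spin
    split_ifs <;> norm_num
  simp only [hspin, sum_sub_distrib, ← mul_sum, sum_boole]
  simp

variable [DecidableEq V] {E : Finset (Sym2 V)} {K : Sym2 V → ℝ}

/-- The Lee–Yang matrix of the Ising model with couplings `K` on the edge set `E`: its entry at
`i, j` is the Boltzmann weight of opposite spins at `i` and `j` relative to equal ones. -/
noncomputable def isingMatrix (E : Finset (Sym2 V)) (K : Sym2 V → ℝ) : Matrix V V ℂ :=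
  Matrix.of fun i j => if s(i, j) ∈ E then (Real.exp (-2 * K s(i, j)) : ℂ) else 1

theorem isHermitian_isingMatrix (E : Finset (Sym2 V)) (K : Sym2 V → ℝ) :
    (isingMatrix E K).IsHermitian := by
  refine Matrix.IsHermitian.ext fun i j => ?_
  simp only [isingMatrix, Matrix.of_apply, Sym2.eq_swap (a := j)]
  split_ifs
  · exact Complex.conj_ofReal _
  · exact star_one ℂ

theorem isingMatrix_pos (E : Finset (Sym2 V)) (K : Sym2 V → ℝ) (i j : V) :
    0 < isingMatrix E K i j := by
  simp only [isingMatrix, Matrix.of_apply]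
  split_ifs
  · exact Complex.zero_lt_real.2 (Real.exp_pos _)
  · exact zero_lt_one

theorem cutCoeff_isingMatrix_pos [Fintype V] (E : Finset (Sym2 V)) (K : Sym2 V → ℝ)
    (S : Finset V) : 0 < cutCoeff (isingMatrix E K) univ S :=
  prod_pos fun i _ => prod_pos fun j _ => isingMatrix_pos E K i j

theorem norm_isingMatrix_le_one (hK : ∀ e ∈ E, 0 ≤ K e) (i j : V) :
    ‖isingMatrix E K i j‖ ≤ 1 := by
  simp only [isingMatrix, Matrix.of_apply]
  split_ifs with hij
  · rw [Complex.norm_of_nonneg (Real.exp_pos _).le, Real.exp_le_one_iff]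
    linarith [hK _ hij]
  · exact norm_one.le

theorem norm_isingMatrix_lt_one {i j : V} (hij : s(i, j) ∈ E) (hK : 0 < K s(i, j)) :
    ‖isingMatrix E K i j‖ < 1 := by
  simp only [isingMatrix, Matrix.of_apply, if_pos hij]
  rw [Complex.norm_of_nonneg (Real.exp_pos _).le, Real.exp_lt_one_iff]
  linarith

variable [Fintype V]

theorem isStrictLeeYang_cutCoeff_isingMatrix (hK : ∀ e ∈ E, 0 ≤ K e)
    (hconn : (SimpleGraph.fromEdgeSet {e : Sym2 V | e ∈ E ∧ 0 < K e}).Connected) :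
    IsStrictLeeYang (cutCoeff (isingMatrix E K) univ) := by
  refine isStrictLeeYang_cutCoeff (isHermitian_isingMatrix E K) (norm_isingMatrix_le_one hK)
    (hconn.mono fun i j hij => ?_)
  obtain ⟨⟨hE, hpos⟩, hne⟩ := (SimpleGraph.fromEdgeSet_adj _).1 hij
  exact (SimpleGraph.fromRel_adj _ _ _).2 ⟨hne, Or.inl (norm_isingMatrix_lt_one hE hpos)⟩

theorem prod_prod_ite_mem_eq_prod_filter_pairProd {M : Type*} [CommMonoid M]
    (E : Finset (Sym2 V)) (f : Sym2 V → M) (σ : V → Bool) :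
    ∏ i with σ i, ∏ j ∈ univ \ ({i | σ i} : Finset V), (if s(i, j) ∈ E then f s(i, j) else 1)
      = ∏ e ∈ E with pairProd σ e = -1, f e := by
  rw [← prod_product', ← prod_filter]
  refine prod_bij (fun p _ => s(p.1, p.2)) ?_ ?_ ?_ (fun _ _ => rfl)
  · rintro ⟨i, j⟩ hp
    simp only [mem_filter, mem_product, mem_sdiff, mem_univ, true_and, Bool.not_eq_true] at hp
    simp [mem_filter, hp, pairProd_mk_eq_neg_one_iff]
  · rintro ⟨i, j⟩ hp ⟨i', j'⟩ hp' heq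
    simp only [mem_filter, mem_product, mem_sdiff, mem_univ, true_and, Bool.not_eq_true] at hp hp'
    rcases Sym2.eq_iff.1 heq with ⟨rfl, rfl⟩ | ⟨rfl, rfl⟩
    · rfl
    · simp [hp.1.1] at hp'
  · intro e he
    obtain ⟨heE, hcut⟩ := mem_filter.1 he
    induction e using Sym2.ind with
    | _ i j =>
      rw [pairProd_mk_eq_neg_one_iff] at hcut
      cases hi : σ i
      · exact ⟨(j, i), by simp_all [Sym2.eq_swap (a := j)], Sym2.eq_swap⟩
      · exact ⟨(i, j), by simp_all, rfl⟩

theorem exp_sum_mul_pairProd (E : Finset (Sym2 V)) (K : Sym2 V → ℝ) (σ : V → Bool) :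
    Complex.exp (∑ e ∈ E, K e * pairProd σ e : ℝ)
      = Complex.exp (∑ e ∈ E, K e : ℝ) * cutCoeff (isingMatrix E K) univ {i | σ i} := by
  simp only [cutCoeff, isingMatrix, Matrix.of_apply]
  rw [prod_prod_ite_mem_eq_prod_filter_pairProd E fun e => (Real.exp (-2 * K e) : ℂ), prod_filter]
  push_cast
  rw [Complex.exp_sum, Complex.exp_sum, ← prod_mul_distrib]
  refine prod_congr rfl fun e _ => ?_
  split_ifs with he
  · rw [he, ← Complex.exp_add]
    push_cast
    ring_nf
  · simp [pairProd_eq_one_of_ne_neg_one he]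

theorem isingZ_eq_isingZ_add_single {u v : V} (huv : s(u, v) ∈ E) (J : Sym2 V → ℝ) (t : ℝ) (x : ℂ) :
    IsingZ E J u v t x = IsingZ E (J + Pi.single s(u, v) t) u v 0 x := by
  have henergy : ∀ σ, ∑ e ∈ E, (J + Pi.single s(u, v) t : Sym2 V → ℝ) e * pairProd σ e
      = t * (spin (σ u) * spin (σ v)) + ∑ e ∈ E, J e * pairProd σ e := fun σ => by
    simp only [Pi.add_apply, Pi.single_apply, add_mul, ite_mul, zero_mul, sum_add_distrib,
      sum_ite_eq', if_pos huv]
    exact add_comm _ _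
  simp only [IsingZ, henergy]
  simp

theorem isingZ_zero_eq_exp_mul_eval (E : Finset (Sym2 V)) (K : Sym2 V → ℝ) (u v : V) (x : ℂ) :
    IsingZ E K u v 0 x
      = Complex.exp ((∑ e ∈ E, K e : ℝ) - Fintype.card V * x * Complex.I) *
        (diagonalPoly (cutCoeff (isingMatrix E K) univ)).eval
          (Complex.exp (2 * x * Complex.I)) := by
  simp only [IsingZ, diagonalPoly, eval_finsetSum, eval_mul, eval_C, eval_pow, eval_X, mul_sum]
  refine sum_nbij' (fun σ => ({i | σ i} : Finset V)) (fun S i => decide (i ∈ S))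
    (by simp) (by simp) (by simp) (by simp) fun σ _ => ?_
  rw [zero_mul, zero_add, Complex.exp_add, exp_sum_mul_pairProd, sum_spin,
    mul_right_comm, mul_left_comm _ (cutCoeff _ _ _), mul_comm (cutCoeff _ _ _),
    ← Complex.exp_nat_mul, ← Complex.exp_add, ← Complex.exp_add]
  push_cast
  ring_nf

theorem isingZ_zero_eq_zero_iff {u v : V} {x : ℂ} :
    IsingZ E K u v 0 x = 0 ↔
      (diagonalPoly (cutCoeff (isingMatrix E K) univ)).eval
        (Complex.exp (2 * x * Complex.I)) = 0 := by
  rw [isingZ_zero_eq_exp_mul_eval, mul_eq_zero, or_iff_right (Complex.exp_ne_zero _)]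

theorem encard_setOf_isingZ_zero_eq_zero (hK : ∀ e ∈ E, 0 ≤ K e)
    (hconn : (SimpleGraph.fromEdgeSet {e : Sym2 V | e ∈ E ∧ 0 < K e}).Connected) (u v : V) :
    {x : ℝ | x ∈ Set.Ioo 0 (π / 2) ∧ IsingZ E K u v 0 x = 0}.encard
      = (Fintype.card V / 2 : ℕ) := by
  have : Nonempty V := ⟨u⟩
  simp only [isingZ_zero_eq_zero_iff]
  exact (isStrictLeeYang_cutCoeff_isingMatrix hK hconn).encard_setOf_eval_exp_two_mul_I_eq_zero
    (cutCoeff_isingMatrix_pos E K)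

theorem isingZ_zero_pi_div_two_eq_zero_iff (hK : ∀ e ∈ E, 0 ≤ K e)
    (hconn : (SimpleGraph.fromEdgeSet {e : Sym2 V | e ∈ E ∧ 0 < K e}).Connected) (u v : V) :
    IsingZ E K u v 0 ((π / 2 : ℝ) : ℂ) = 0 ↔ Odd (Fintype.card V) := by
  have : Nonempty V := ⟨u⟩
  have hexp : Complex.exp (2 * ((π / 2 : ℝ) : ℂ) * Complex.I) = -1 := by
    rw [Complex.ofReal_div, Complex.ofReal_ofNat, mul_div_cancel₀ _ two_ne_zero,
      Complex.exp_pi_mul_I]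
  rw [isingZ_zero_eq_zero_iff, hexp]
  exact (isStrictLeeYang_cutCoeff_isingMatrix hK hconn).eval_neg_one_eq_zero_iff_odd_card
    (cutCoeff_isingMatrix_pos E K)

end Ising

end LeeYang

theorem stmt9_general {V : Type} [Fintype V] [DecidableEq V]
    (E : Finset (Sym2 V)) (J : Sym2 V → ℝ) (u₀ v₀ : V)
    (hE : s(u₀, v₀) ∈ E) (t : ℝ)
    (hferro : ∀ e ∈ E, 0 ≤ (J + Pi.single s(u₀, v₀) t : Sym2 V → ℝ) e)
    (hconn : (SimpleGraph.fromEdgeSet {e : Sym2 V |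
      e ∈ E ∧ 0 < (J + Pi.single s(u₀, v₀) t : Sym2 V → ℝ) e}).Connected)
    (n : ℕ) (hn : n = Fintype.card V) :
    (Even n →
      {z : ℝ | z ∈ Set.Ioo 0 (π / 2) ∧ IsingZ E J u₀ v₀ t z = 0}.encard
          = (n / 2 : ℕ) ∧
        IsingZ E J u₀ v₀ t ((π / 2 : ℝ) : ℂ) ≠ 0) ∧
    (Odd n →
      {z : ℝ | z ∈ Set.Ioo 0 (π / 2) ∧ IsingZ E J u₀ v₀ t z = 0}.encard
          = ((n - 1) / 2 : ℕ) ∧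
        IsingZ E J u₀ v₀ t ((π / 2 : ℝ) : ℂ) = 0) := by
  simp only [isingZ_eq_isingZ_add_single hE, encard_setOf_isingZ_zero_eq_zero hferro hconn, ne_eq,
    isingZ_zero_pi_div_two_eq_zero_iff hferro hconn, ← hn]
  refine ⟨fun heven => ⟨trivial, Nat.not_odd_iff_even.2 heven⟩, fun hodd => ⟨?_, hodd⟩⟩
  rw [Nat.cast_inj, ← Nat.div_add_mod n 2, Nat.odd_iff.1 hodd]
  lia

theorem stmt9 {V : Type} [Fintype V] [DecidableEq V]
    (E : Finset (Sym2 V)) (J : Sym2 V → ℝ) (u₀ v₀ : V)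
    (hE : s(u₀, v₀) ∈ E)
    (hferro : ∀ e ∈ E, 0 ≤ J e)
    (hconn : (SimpleGraph.fromEdgeSet {e : Sym2 V | e ∈ E ∧ 0 < J e}).Connected)
    (n : ℕ) (hn : n = Fintype.card V)
    (t : ℝ) (ht : 0 ≤ t) :
    (Even n →
      {z : ℝ | z ∈ Set.Ioo 0 (π / 2) ∧ IsingZ E J u₀ v₀ t z = 0}.encard
          = (n / 2 : ℕ) ∧
        IsingZ E J u₀ v₀ t ((π / 2 : ℝ) : ℂ) ≠ 0) ∧
    (Odd n →
      {z : ℝ | z ∈ Set.Ioo 0 (π / 2) ∧ IsingZ E J u₀ v₀ t z = 0}.encard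
          = ((n - 1) / 2 : ℕ) ∧
        IsingZ E J u₀ v₀ t ((π / 2 : ℝ) : ℂ) = 0) := by
  have hle : J ≤ J + Pi.single s(u₀, v₀) t := le_add_of_nonneg_right (Pi.single_nonneg.2 ht)
  exact stmt9_general E J u₀ v₀ hE t (fun e he => (hferro e he).trans (hle e))
    (hconn.mono (SimpleGraph.fromEdgeSet_mono fun e he => ⟨he.1, he.2.trans_le (hle e)⟩)) n hn
end

section
/- Suppose that n is even, that J is ferromagnetic, and that the subgraph G_{>0} is connected. Let x_1, …, x_{n/2} : [0,∞) → ℝ be continuous functions such that for every t ≥ 0 one has 0 < x_1(t) < … < x_{n/2}(t) < π/2 and {x ∈ (0,π/2) : Z_{G,t}(x) = 0} = {x_1(t), …, x_{n/2}(t)}. Set y_k(t) := sin²x_k(t), y_0(0) := 0 and y_{n/2+1}(0) := 1. Then for each fixed s ∈ (0,∞) and each k ∈ {1, …, n/2}, exactly one of the following three cases occurs: (a) y_k(t) = y_k(0) for every t ∈ [0,s]; (b) y_k(s) ∈ (y_{k−1}(0), y_k(0)) and y_k(t) ∈ (y_k(s), y_k(0)) for every t ∈ (0,s); (c) y_k(s)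 ∈ (y_k(0), y_{k+1}(0)) and y_k(t) ∈ (y_k(0), y_k(s)) for every t ∈ (0,s). -/
open scoped Real

/-- Exactly one of three propositions holds. -/
def ExactlyOne (A B C : Prop) : Prop :=
  (A ∧ ¬B ∧ ¬C) ∨ (¬A ∧ B ∧ ¬C) ∨ (¬A ∧ ¬B ∧ C)

/-!
For a spin product `ε = ±1` the weights `exp (r * ε)` at three couplings are linearly dependent,
with coefficients that do not depend on `ε`, so `sinh (t' - t) * Z_r = sinh (t' - r) * Z_t +
sinh (r - t) * Z_{t'}`. Hence a field value that is a zero of `Z` at two different couplings is a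
zero at every coupling. Since the zero curves are continuous and distinct curves never meet, such a
common zero always lies on the same curve. Each curve is therefore constant or injective, hence
constant or strictly monotone, and it never takes a value of another curve, so it stays between the
initial values of its neighbours. All of this survives the change of variables `y = sin² x`, which
is strictly monotone on `(0, π / 2)`.
-/

open Set

lemma ExactlyOne.of_trichotomy {α : Type*} [LinearOrder α] {u v : α} {A B C : Prop}
    (hA : A → u = v) (hB : B → u < v) (hC : C → v < u) (h : A ∨ B ∨ C) : ExactlyOne A B C := by
  rcases h with ha | hb | hc
  · exact Or.inl ⟨ha, fun hb => (hB hb).ne (hA ha), fun hc => (hC hc).ne' (hA ha)⟩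
  · exact Or.inr (Or.inl ⟨fun ha => (hB hb).ne (hA ha), hb, fun hc => (hB hb).not_gt (hC hc)⟩)
  · exact Or.inr (Or.inr ⟨fun ha => (hC hc).ne' (hA ha), fun hb => (hB hb).not_gt (hC hc), hc⟩)

lemma exactlyOne_const_anti_mono_of_const_or_injOn {α β : Type*}
    [ConditionallyCompleteLinearOrder α] [DenselyOrdered α] [TopologicalSpace α] [OrderTopology α]
    [LinearOrder β] [TopologicalSpace β] [OrderClosedTopology β]
    {f : α → β} {a b : α} {lo hi : β} (hab : a < b) (hf : ContinuousOn f (Icc a b))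
    (hconst_or_inj : (∀ t ∈ Icc a b, f t = f a) ∨ InjOn f (Icc a b)) (hfb : f b ∈ Ioo lo hi) :
    ExactlyOne (∀ t ∈ Icc a b, f t = f a)
      (f b ∈ Ioo lo (f a) ∧ ∀ t ∈ Ioo a b, f t ∈ Ioo (f b) (f a))
      (f b ∈ Ioo (f a) hi ∧ ∀ t ∈ Ioo a b, f t ∈ Ioo (f a) (f b)) := by
  have ha : a ∈ Icc a b := left_mem_Icc.mpr hab.le
  have hb : b ∈ Icc a b := right_mem_Icc.mpr hab.le
  refine ExactlyOne.of_trichotomy (u := f b) (v := f a)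
    (fun h => h b hb) (fun h => h.1.2) (fun h => h.1.1) ?_
  refine hconst_or_inj.imp_right fun hinj => ?_
  rcases hf.strictMonoOn_of_injOn_Icc' hab.le hinj with hmono | hanti
  · exact Or.inr ⟨⟨hmono ha hb hab, hfb.2⟩, fun t ht =>
      ⟨hmono ha (Ioo_subset_Icc_self ht) ht.1, hmono (Ioo_subset_Icc_self ht) hb ht.2⟩⟩
  · exact Or.inl ⟨⟨hfb.1, hanti ha hb hab⟩, fun t ht =>
      ⟨hanti (Ioo_subset_Icc_self ht) hb ht.2, hanti ha (Ioo_subset_Icc_self ht) ht.1⟩⟩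

lemma lt_of_continuousOn_of_forall_ne {α β : Type*} [TopologicalSpace α] [LinearOrder β]
    [TopologicalSpace β] [OrderClosedTopology β] {S : Set α} (hS : IsPreconnected S) {f g : α → β}
    (hf : ContinuousOn f S) (hg : ContinuousOn g S) (hne : ∀ t ∈ S, f t ≠ g t) {a b : α}
    (ha : a ∈ S) (hb : b ∈ S) (hlt : f a < g a) : f b < g b := by
  by_contra! hle
  obtain ⟨t, ht, heq⟩ := hS.intermediate_value₂ ha hb hf hg hlt.le hle
  exact hne t ht heq

section PersistentFamily

variable {ι α β γ : Type*} [TopologicalSpace α] [TopologicalSpace β] [TopologicalSpace γ]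

/-- A finite family of curves `y i`, `i ∈ I`, continuous on `S` and with distinct values at each
time, such that a value taken by the family at two different times is taken at all times, though a
priori by a varying member of the family. It abstracts the zeros of an Ising partition function
as functions of one coupling. -/
structure IsPersistentFamily (y : ι → α → β) (I : Set ι) (S : Set α) : Prop where
  finite : I.Finite
  continuousOn : ∀ i ∈ I, ContinuousOn (y i) S
  injOn : ∀ t ∈ S, InjOn (y · t) I
  image_inter_image_subset : ∀ t ∈ S, ∀ t' ∈ S, t ≠ t' → ∀ r ∈ S,
    (y · t) '' I ∩ (y · t') '' I ⊆ (y · r) '' I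

namespace IsPersistentFamily

variable {y : ι → α → β} {I : Set ι} {S : Set α}

lemma comp (h : IsPersistentFamily y I S) {g : β → γ} {U : Set β} (hg : ContinuousOn g U)
    (hginj : InjOn g U) (hU : ∀ i ∈ I, MapsTo (y i) S U) :
    IsPersistentFamily (fun i t => g (y i t)) I S where
  finite := h.finite
  continuousOn i hi := hg.comp (h.continuousOn i hi) (hU i hi)
  injOn t ht := hginj.comp (h.injOn t ht) fun i hi => hU i hi ht
  image_inter_image_subset := by
    rintro t ht t' ht' hne r hr _ ⟨⟨i, hi, rfl⟩, j, hj, hji⟩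
    have heq : y j t' = y i t := hginj (hU j hj ht') (hU i hi ht) hji
    obtain ⟨l, hl, hlr⟩ :=
      h.image_inter_image_subset t ht t' ht' hne r hr ⟨⟨i, hi, rfl⟩, j, hj, heq⟩
    exact ⟨l, hl, congrArg g hlr⟩

section T1

variable [T1Space β]

-- The finitely many sets `{t ∈ S | y i t = c}` are closed and partition the connected set `S`.
lemma eq_of_forall_mem_image (h : IsPersistentFamily y I S) (hS : IsPreconnected S) {c : β}
    (hc : ∀ t ∈ S, c ∈ (y · t) '' I) {k : ι} (hk : k ∈ I) {t₀ : α} (ht₀ : t₀ ∈ S)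
    (hkc : y k t₀ = c) : ∀ t ∈ S, y k t = c := by
  have : PreconnectedSpace S := Subtype.preconnectedSpace hS
  let C (i : ι) : Set S := {t | y i t = c}
  have hclosed : ∀ i ∈ I, IsClosed (C i) := fun i hi =>
    isClosed_singleton.preimage (h.continuousOn i hi).domRestrict
  have hcompl : (C k)ᶜ = ⋃ i ∈ I \ {k}, C i := by
    ext t
    simp only [mem_compl_iff, mem_iUnion, exists_prop]
    constructor
    · intro hkt
      obtain ⟨i, hi, hit⟩ := hc t t.2
      exact ⟨i, ⟨hi, fun hik => hkt (hik ▸ hit)⟩, hit⟩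
    · rintro ⟨i, ⟨hi, hik⟩, hit⟩ hkt
      exact hik (h.injOn t t.2 hi hk (Eq.trans hit (Eq.symm hkt)))
  have hopen : IsOpen (C k) := by
    rw [← isClosed_compl_iff, hcompl]
    exact h.finite.sdiff.isClosed_biUnion fun i hi => hclosed i hi.1
  have huniv : C k = univ := IsClopen.eq_univ ⟨hclosed k hk, hopen⟩ ⟨⟨t₀, ht₀⟩, hkc⟩
  intro t ht
  exact huniv.ge (mem_univ (⟨t, ht⟩ : S))

lemma eq_of_eq_of_ne (h : IsPersistentFamily y I S) (hS : IsPreconnected S) {i j : ι}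
    (hi : i ∈ I) (hj : j ∈ I) {t t' : α} (ht : t ∈ S) (ht' : t' ∈ S) (hne : t ≠ t')
    (heq : y i t = y j t') : ∀ r ∈ S, y i r = y i t :=
  h.eq_of_forall_mem_image hS
    (fun r hr => h.image_inter_image_subset t ht t' ht' hne r hr ⟨⟨i, hi, rfl⟩, j, hj, heq.symm⟩)
    hi ht rfl

lemma const_or_injOn (h : IsPersistentFamily y I S) (hS : IsPreconnected S) {k : ι} (hk : k ∈ I)
    {a : α} (ha : a ∈ S) : (∀ t ∈ S, y k t = y k a) ∨ InjOn (y k) S := by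
  refine or_iff_not_imp_right.mpr fun hinj t ht => ?_
  simp only [InjOn, not_forall] at hinj
  obtain ⟨r, hr, r', hr', heq, hne⟩ := hinj
  have hconst := h.eq_of_eq_of_ne hS hk hk hr hr' hne heq
  rw [hconst t ht, hconst a ha]

lemma apply_ne_apply (h : IsPersistentFamily y I S) (hS : IsPreconnected S) {i j : ι}
    (hi : i ∈ I) (hj : j ∈ I) (hij : i ≠ j) {t t' : α} (ht : t ∈ S) (ht' : t' ∈ S) :
    y i t ≠ y j t' := by
  intro heq
  have heq' : y i t' = y j t' := by
    rcases eq_or_ne t t' with rfl | hne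
    · exact heq
    · exact (h.eq_of_eq_of_ne hS hi hj ht ht' hne heq t' ht').trans heq
  exact hij (h.injOn t' ht' hi hj heq')

end T1

section Order

variable [LinearOrder β] [OrderClosedTopology β]

lemma apply_lt_apply (h : IsPersistentFamily y I S) (hS : IsPreconnected S) {i j : ι}
    (hi : i ∈ I) (hj : j ∈ I) {a t t' : α} (ha : a ∈ S) (ht : t ∈ S) (ht' : t' ∈ S)
    (hlt : y i a < y j a) : y i t < y j t' := by
  have hij : i ≠ j := by rintro rfl; exact hlt.false
  have hlt' : y i t < y j a :=
    lt_of_continuousOn_of_forall_ne hS (h.continuousOn i hi) continuousOn_const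
      (fun r hr => h.apply_ne_apply hS hi hj hij hr ha) ha ht hlt
  exact lt_of_continuousOn_of_forall_ne hS continuousOn_const (h.continuousOn j hj)
    (fun r hr => h.apply_ne_apply hS hi hj hij ht hr) ha ht' hlt'

lemma apply_mem_Ioo_neighbors {y : ℕ → α → β} {m k : ℕ} {lo hi : β} {a b : α}
    (h : IsPersistentFamily y (Icc 1 m) S) (hS : IsPreconnected S) (ha : a ∈ S) (hb : b ∈ S)
    (hlt : ∀ j, 1 ≤ j → j < m → y j a < y (j + 1) a) (hk : k ∈ Icc 1 m)
    (hmem : y k b ∈ Ioo lo hi) :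
    y k b ∈ Ioo (if k = 1 then lo else y (k - 1) a) (if k = m then hi else y (k + 1) a) := by
  obtain ⟨hk₁, hkm⟩ := hk
  constructor
  · split_ifs with hk'
    · exact hmem.1
    · have hpred : k - 1 ∈ Icc 1 m := ⟨by omega, by omega⟩
      refine h.apply_lt_apply hS hpred ⟨hk₁, hkm⟩ ha ha hb ?_
      simpa only [Nat.sub_add_cancel hk₁] using hlt (k - 1) hpred.1 (by omega)
  · split_ifs with hk'
    · exact hmem.2
    · exact h.apply_lt_apply hS ⟨hk₁, hkm⟩ ⟨by omega, by omega⟩ ha hb ha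
        (hlt k hk₁ (by omega))

end Order

end IsPersistentFamily

end PersistentFamily

lemma sinh_sub_mul_exp_mul_sign {ε : ℂ} (hε : ε = 1 ∨ ε = -1) (t t' r : ℂ) :
    Complex.sinh (t' - t) * Complex.exp (r * ε) =
      Complex.sinh (t' - r) * Complex.exp (t * ε) +
        Complex.sinh (r - t) * Complex.exp (t' * ε) := by
  rcases hε with rfl | rfl <;>
  · simp only [Complex.sinh, sub_mul, div_mul_eq_mul_div, ← Complex.exp_add]
    ring_nf

section Ising

variable {V : Type} [Fintype V] [DecidableEq V]

lemma sinh_sub_mul_IsingZ (E : Finset (Sym2 V)) (J : Sym2 V → ℝ) (u₀ v₀ : V) (t t' r z : ℂ) :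
    Complex.sinh (t' - t) * IsingZ E J u₀ v₀ r z =
      Complex.sinh (t' - r) * IsingZ E J u₀ v₀ t z +
        Complex.sinh (r - t) * IsingZ E J u₀ v₀ t' z := by
  have hspin : ∀ σ : V → Bool, ((spin (σ u₀) * spin (σ v₀) : ℝ) : ℂ) = 1 ∨
      ((spin (σ u₀) * spin (σ v₀) : ℝ) : ℂ) = -1 := by
    intro σ
    cases σ u₀ <;> cases σ v₀ <;> simp [spin]
  simp only [IsingZ, Finset.mul_sum, ← Finset.sum_add_distrib]
  refine Finset.sum_congr rfl fun σ _ => ?_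
  simp only [add_assoc, Complex.exp_add (_ * _)]
  rw [← mul_assoc, sinh_sub_mul_exp_mul_sign (hspin σ)]
  ring

lemma IsingZ_eq_zero_of_ne {E : Finset (Sym2 V)} {J : Sym2 V → ℝ} {u₀ v₀ : V} {z : ℂ} {t t' : ℝ}
    (hne : t ≠ t') (ht : IsingZ E J u₀ v₀ t z = 0) (ht' : IsingZ E J u₀ v₀ t' z = 0) (r : ℂ) :
    IsingZ E J u₀ v₀ r z = 0 := by
  have hsinh : Complex.sinh (t' - t) ≠ 0 := by
    rw [← Complex.ofReal_sub, ← Complex.ofReal_sinh, Complex.ofReal_ne_zero, Ne,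
      Real.sinh_eq_zero, sub_eq_zero]
    exact hne.symm
  refine (mul_eq_zero.mp ?_).resolve_left hsinh
  rw [sinh_sub_mul_IsingZ, ht, ht', mul_zero, mul_zero, add_zero]

lemma isPersistentFamily_of_image_eq_IsingZ_zeros {ι : Type*} {E : Finset (Sym2 V)}
    {J : Sym2 V → ℝ} {u₀ v₀ : V} {x : ι → ℝ → ℝ} {I : Set ι} {S U : Set ℝ} (hI : I.Finite)
    (hcont : ∀ k ∈ I, ContinuousOn (x k) S) (hinj : ∀ t ∈ S, InjOn (x · t) I)
    (hzeros : ∀ t ∈ S, {z : ℝ | z ∈ U ∧ IsingZ E J u₀ v₀ t z = 0} = (x · t) '' I) :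
    IsPersistentFamily x I S where
  finite := hI
  continuousOn := hcont
  injOn := hinj
  image_inter_image_subset t ht t' ht' hne r hr := by
    rw [← hzeros t ht, ← hzeros t' ht', ← hzeros r hr]
    rintro z ⟨⟨hzU, hz⟩, -, hz'⟩
    exact ⟨hzU, IsingZ_eq_zero_of_ne hne hz hz' r⟩

end Ising

lemma strictMonoOn_sin_sq : StrictMonoOn (fun a : ℝ => Real.sin a ^ 2) (Icc 0 (π / 2)) := by
  intro a ha b hb hab
  have hsub : Icc 0 (π / 2) ⊆ Icc (-(π / 2)) (π / 2) :=
    Icc_subset_Icc_left (by linarith [Real.pi_pos])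
  have hsin := Real.strictMonoOn_sin (hsub ha) (hsub hb) hab
  exact pow_lt_pow_left₀ hsin (Real.sin_nonneg_of_mem_Icc ⟨ha.1, by linarith [ha.2, Real.pi_pos]⟩)
    two_ne_zero

lemma mapsTo_sin_sq_Ioo : MapsTo (fun a : ℝ => Real.sin a ^ 2) (Ioo 0 (π / 2)) (Ioo 0 1) := by
  simpa using strictMonoOn_sin_sq.mapsTo_Ioo

theorem stmt11_general {V : Type} [Fintype V] [DecidableEq V]
    (E : Finset (Sym2 V)) (J : Sym2 V → ℝ) (u₀ v₀ : V) {m : ℕ} {x : ℕ → ℝ → ℝ} {a b : ℝ}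
    (hab : a < b)
    (hcont : ∀ k ∈ Finset.Icc 1 m, ContinuousOn (x k) (Icc a b))
    (hlt : ∀ t ∈ Icc a b, ∀ k, 1 ≤ k → k < m → x k t < x (k + 1) t)
    (hzeros : ∀ t ∈ Icc a b,
      {z : ℝ | z ∈ Ioo 0 (π / 2) ∧ IsingZ E J u₀ v₀ t z = 0} = (fun k => x k t) '' Icc 1 m) :
    ∀ k ∈ Finset.Icc 1 m,
      ExactlyOne
        (∀ t ∈ Icc a b, Real.sin (x k t) ^ 2 = Real.sin (x k a) ^ 2)
        (Real.sin (x k b) ^ 2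
            ∈ Ioo (if k = 1 then 0 else Real.sin (x (k - 1) a) ^ 2) (Real.sin (x k a) ^ 2) ∧
          ∀ t ∈ Ioo a b,
            Real.sin (x k t) ^ 2 ∈ Ioo (Real.sin (x k b) ^ 2) (Real.sin (x k a) ^ 2))
        (Real.sin (x k b) ^ 2
            ∈ Ioo (Real.sin (x k a) ^ 2) (if k = m then 1 else Real.sin (x (k + 1) a) ^ 2) ∧
          ∀ t ∈ Ioo a b,
            Real.sin (x k t) ^ 2 ∈ Ioo (Real.sin (x k a) ^ 2) (Real.sin (x k b) ^ 2)) := by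
  simp only [← Finset.mem_coe, Finset.coe_Icc] at hcont ⊢
  intro k hk
  have ha : a ∈ Icc a b := left_mem_Icc.mpr hab.le
  have hb : b ∈ Icc a b := right_mem_Icc.mpr hab.le
  have hmem : ∀ i ∈ Icc 1 m, MapsTo (x i) (Icc a b) (Ioo 0 (π / 2)) := fun i hi t ht =>
    ((hzeros t ht).ge (mem_image_of_mem _ hi)).1
  have hinj : ∀ t ∈ Icc a b, InjOn (x · t) (Icc 1 m) := fun t ht =>
    (strictMonoOn_of_lt_add_one ordConnected_Icc fun i _ hi hi' => hlt t ht i hi.1 hi'.2).injOn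
  have hsin := strictMonoOn_sin_sq.mono Ioo_subset_Icc_self
  have hx := isPersistentFamily_of_image_eq_IsingZ_zeros (finite_Icc 1 m) hcont hinj hzeros
  have hy := hx.comp (Real.continuous_sin.pow 2).continuousOn hsin.injOn hmem
  have hneighbors := hy.apply_mem_Ioo_neighbors isPreconnected_Icc ha hb
    (fun i hi him => hsin (hmem i ⟨hi, him.le⟩ ha) (hmem (i + 1) ⟨by omega, him⟩ ha)
      (hlt a ha i hi him))
    hk (mapsTo_sin_sq_Ioo (hmem k hk hb))
  exact exactlyOne_const_anti_mono_of_const_or_injOn hab (hy.continuousOn k hk)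
    (hy.const_or_injOn isPreconnected_Icc hk ha) hneighbors

theorem stmt11 {V : Type} [Fintype V] [DecidableEq V]
    (E : Finset (Sym2 V)) (J : Sym2 V → ℝ) (u₀ v₀ : V)
    (hE : s(u₀, v₀) ∈ E)
    (hferro : ∀ e ∈ E, 0 ≤ J e)
    (hconn : (SimpleGraph.fromEdgeSet {e : Sym2 V | e ∈ E ∧ 0 < J e}).Connected)
    (n : ℕ) (hn : n = Fintype.card V) (heven : Even n)
    (x : ℕ → ℝ → ℝ)
    (hcont : ∀ k ∈ Finset.Icc 1 (n / 2), ContinuousOn (x k) (Set.Ici 0))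
    (hzeros : ∀ t : ℝ, 0 ≤ t →
      (∀ k ∈ Finset.Icc 1 (n / 2), 0 < x k t ∧ x k t < π / 2) ∧
      (∀ k, 1 ≤ k → k < n / 2 → x k t < x (k + 1) t) ∧
      {z : ℝ | z ∈ Set.Ioo 0 (π / 2) ∧ IsingZ E J u₀ v₀ t z = 0}
        = (fun k => x k t) '' Set.Icc 1 (n / 2)) :
    ∀ s : ℝ, 0 < s → ∀ k ∈ Finset.Icc 1 (n / 2),
      ExactlyOne
        (∀ t : ℝ, t ∈ Set.Icc 0 s → Real.sin (x k t) ^ 2 = Real.sin (x k 0) ^ 2)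
        (Real.sin (x k s) ^ 2
            ∈ Set.Ioo (if k = 1 then 0 else Real.sin (x (k - 1) 0) ^ 2)
                (Real.sin (x k 0) ^ 2) ∧
          ∀ t : ℝ, t ∈ Set.Ioo 0 s →
            Real.sin (x k t) ^ 2
              ∈ Set.Ioo (Real.sin (x k s) ^ 2) (Real.sin (x k 0) ^ 2))
        (Real.sin (x k s) ^ 2
            ∈ Set.Ioo (Real.sin (x k 0) ^ 2)
                (if k = n / 2 then 1 else Real.sin (x (k + 1) 0) ^ 2) ∧
          ∀ t : ℝ, t ∈ Set.Ioo 0 s →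
            Real.sin (x k t) ^ 2
              ∈ Set.Ioo (Real.sin (x k 0) ^ 2) (Real.sin (x k s) ^ 2)) :=
  fun _ hs => stmt11_general E J u₀ v₀ hs (fun k hk => (hcont k hk).mono Icc_subset_Ici_self)
    (fun t ht => (hzeros t ht.1).2.1) fun t ht => (hzeros t ht.1).2.2
end

section
/- Let n be a positive even integer. Then there exist continuous functions x_1, …, x_{n/2} : [0,∞) → ℝ with x_k(0) = π/2 for each k, such that for every t > 0 one has 0 < x_1(t) < … < x_{n/2}(t) < π/2 and {x ∈ (0,π/2] : Z_{n,t}(x) = 0} = {x_1(t), …, x_{n/2}(t)}; moreover, each x_k is strictly decreasing on [0,∞), and lim_{t→∞} x_k(t) = (2k−1)π/(2n). -/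
open scoped Real

/-- The Curie-Weiss partition function `Z_{n,t}(x)`. -/
noncomputable def CWZ (n : ℕ) (t x : ℂ) : ℂ :=
  ∑ σ : Fin n → Bool, Complex.exp
    (t * ((∑ j, spin (σ j) : ℝ) : ℂ) ^ 2
      + Complex.I * x * ((∑ j, spin (σ j) : ℝ) : ℂ))

/-!
With `q = exp (-4 * t)` one has `Z_{n,t}(x) = exp (t * n ^ 2) * f_n(q, x)`, where
`f_n(q, x) = ∑ k, C(n, k) q ^ (k (n - k)) cos ((n - 2 k) x)` is `exp (-i n x) P_n(exp (2 i x))` for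
the Lee–Yang polynomial `P_n` of the complete graph. If `S_n` denotes `P_n` with its roots scaled
by `q`, then `P_{n+1}(z) = P_n(q z) + z S_n(z)` and `P_{n+1}' = (n + 1) S_n`. For `|q| < 1` it
follows by induction that all roots of `P_n` are simple and lie on the unit circle. Hence
`f_{2m}(q, ·)` has exactly `m` zeros in `(0, π / 2)`, and they move continuously with
`q ∈ (-1, 1)`.

Monotonicity is proved by counting zeros in the other variable. Since
`∂_q f_{n+2} = (n + 2) (n + 1) q ^ n f_n`, Rolle's theorem shows that for fixed `x` the function
`f_{2m}(·, x)` has at most `m` zeros. Each of the `m` zero curves tends to `0` as `q → -1` and to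
`π / 2` as `q → 1`, so it attains every level in `(0, π / 2)`; therefore it attains each level only
once. The limit `t → ∞` is the value at `q = 0`, where `f_n(0, x) = 2 cos (n x)`.
-/

open Filter Polynomial Set Topology

section WeightedRolle

variable {f w g : ℝ → ℝ} {a b : ℝ}

theorem lt_of_hasDerivAt_mul_of_pos (hab : a < b) (hfc : ContinuousOn f (Icc a b))
    (hf : ∀ x ∈ Ioo a b, HasDerivAt f (w x * g x) x) (hw : ∀ x ∈ Ioo a b, 0 ≤ w x)
    (hw' : Dense {x | w x ≠ 0}) (hg : ∀ x ∈ Ioo a b, 0 < g x) : f a < f b := by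
  have hmono : MonotoneOn f (Icc a b) := by
    refine monotoneOn_of_hasDerivWithinAt_nonneg (f' := fun x => w x * g x) (convex_Icc a b) hfc
      (fun x hx => ?_) fun x hx => ?_ <;> rw [interior_Icc] at hx
    · exact (hf x hx).hasDerivWithinAt
    · exact mul_nonneg (hw x hx) (hg x hx).le
  have ha := left_mem_Icc.2 hab.le
  have hb := right_mem_Icc.2 hab.le
  refine (hmono ha hb hab.le).lt_of_ne fun heq => ?_
  obtain ⟨c, hwc, hc⟩ := hw'.exists_between hab
  have hconst : f =ᶠ[𝓝 c] fun _ => f a := by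
    filter_upwards [Ioo_mem_nhds hc.1 hc.2] with x hx
    have hx' := Ioo_subset_Icc_self hx
    exact le_antisymm (heq ▸ hmono hx' hb hx.2.le) (hmono ha hx' hx.1.le)
  exact mul_ne_zero hwc (hg c hc).ne'
    ((hf c hc).unique ((hasDerivAt_const c (f a)).congr_of_eventuallyEq hconst))

theorem exists_eq_zero_of_hasDerivAt_mul (hab : a < b) (hfc : ContinuousOn f (Icc a b))
    (hfab : f a = f b) (hf : ∀ x ∈ Ioo a b, HasDerivAt f (w x * g x) x)
    (hw : ∀ x ∈ Ioo a b, 0 ≤ w x) (hw' : Dense {x | w x ≠ 0}) (hg : ContinuousOn g (Ioo a b)) :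
    ∃ c ∈ Ioo a b, g c = 0 := by
  by_contra! hne
  have hsign : (∀ x ∈ Ioo a b, 0 < g x) ∨ ∀ x ∈ Ioo a b, g x < 0 := by
    by_contra! h
    obtain ⟨⟨c, hc, hgc⟩, d, hd, hgd⟩ := h
    obtain ⟨e, he, hge⟩ := isPreconnected_Ioo.intermediate_value hc hd hg ⟨hgc, hgd⟩
    exact hne e he hge
  rcases hsign with hpos | hneg
  · exact (lt_of_hasDerivAt_mul_of_pos hab hfc hf hw hw' hpos).ne hfab
  · refine (lt_of_hasDerivAt_mul_of_pos (f := fun x => -f x) (g := fun x => -g x) hab hfc.fun_neg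
      (fun x hx => ?_) hw hw' fun x hx => neg_pos.2 (hneg x hx)).ne (congrArg Neg.neg hfab)
    rw [mul_neg]
    exact (hf x hx).fun_neg

theorem encard_zeros_le_encard_zeros_add_one (hf : ∀ x, HasDerivAt f (w x * g x) x)
    (hw : ∀ x, 0 ≤ w x) (hw' : Dense {x | w x ≠ 0}) (hg : Continuous g) :
    {x | f x = 0}.encard ≤ {x | g x = 0}.encard + 1 := by
  by_cases hfin : {x | g x = 0}.Finite
  · by_contra! hlt
    obtain ⟨s, hs, hcard⟩ := exists_subset_encard_eq (Order.add_one_le_of_lt hlt)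
    lift s to Finset ℝ using finite_of_encard_eq_coe
      (k := hfin.toFinset.card + 1 + 1) (by rw [hcard, hfin.encard_eq_coe_toFinset_card]; rfl)
    have hle : s.card ≤ hfin.toFinset.card + 1 := by
      refine Finset.card_le_of_interleaved fun x hx y hy hxy _ => ?_
      obtain ⟨c, hc, hgc⟩ := exists_eq_zero_of_hasDerivAt_mul hxy
        (fun z _ => (hf z).continuousAt.continuousWithinAt) ((hs hx).trans (hs hy).symm)
        (fun z _ => hf z) (fun z _ => hw z) hw' hg.continuousOn
      exact ⟨c, by simpa using hgc, hc⟩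
    rw [encard_coe_eq_coe_finsetCard, hfin.encard_eq_coe_toFinset_card] at hcard
    norm_cast at hcard
    lia
  · simp [Infinite.encard_eq hfin]

end WeightedRolle

theorem eventually_exists_zero_of_deriv_ne_zero {Q : Type*} [TopologicalSpace Q]
    {f : Q → ℝ → ℝ} {q : Q} {x : ℝ} (hfq : ∀ y, ContinuousAt (fun r => f r y) q)
    (hf : ∀ r, Continuous (f r)) (hx : f q x = 0) (hd : deriv (f q) x ≠ 0) {s : Set ℝ}
    (hs : s ∈ 𝓝 x) : ∀ᶠ r in 𝓝 q, ∃ y ∈ s, f r y = 0 := by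
  wlog hpos : 0 < deriv (f q) x generalizing f
  · have hd' : deriv (fun y => -f q y) x = -deriv (f q) x := deriv.fun_neg
    simpa using this (f := fun r y => -f r y) (fun y => (hfq y).neg) (fun r => (hf r).neg)
      (by simpa using hx) (by simpa [hd'] using hd) (by
        rw [hd']; exact neg_pos.2 (hd.lt_of_le (not_lt.1 hpos)))
  obtain ⟨l, u, hxlu, hlu⟩ := mem_nhds_iff_exists_Ioo_subset.1
    (inter_mem hs (eventually_nhdsWithin_sign_eq_of_deriv_pos hpos hx))
  obtain ⟨y, hly, hyx⟩ := exists_between hxlu.1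
  obtain ⟨z, hxz, hzu⟩ := exists_between hxlu.2
  have hy : f q y < 0 := by
    have := (hlu ⟨hly, hyx.trans hxlu.2⟩).2
    rwa [mem_ofPred_eq, sign_neg (sub_neg.2 hyx), sign_eq_neg_one_iff] at this
  have hz : 0 < f q z := by
    have := (hlu ⟨hxlu.1.trans hxz, hzu⟩).2
    rwa [mem_ofPred_eq, sign_pos (sub_pos.2 hxz), sign_eq_one_iff] at this
  filter_upwards [(hfq y).eventually_lt_const hy, (hfq z).eventually_const_lt hz] with r hry hrz
  obtain ⟨p, hp, hp0⟩ :=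
    intermediate_value_Icc (hyx.trans hxz).le (hf r).continuousOn ⟨hry.le, hrz.le⟩
  exact ⟨p, (hlu ⟨hly.trans_le hp.1, hp.2.trans_lt hzu⟩).1, hp0⟩

theorem exists_strictMono_range_eq_of_encard_eq {α : Type*} [LinearOrder α] {s : Set α} {m : ℕ}
    (hs : s.encard = m) : ∃ y : Fin m → α, StrictMono y ∧ range y = s := by
  lift s to Finset α using finite_of_encard_eq_coe hs
  rw [encard_coe_eq_coe_finsetCard, Nat.cast_inj] at hs
  exact ⟨s.orderEmbOfFin hs, (s.orderEmbOfFin hs).strictMono, s.range_orderEmbOfFin hs⟩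

theorem isOpen_setOf_strictMono_fin (m : ℕ) : IsOpen {y : Fin m → ℝ | StrictMono y} := by
  simp only [StrictMono, ofPred_forall]
  exact isOpen_iInter_of_finite fun i => isOpen_iInter_of_finite fun j =>
    isOpen_iInter_of_finite fun _ => isOpen_lt (continuous_apply i) (continuous_apply j)

/-- `X q` lists in increasing order the zeros of `f q` in the open interval `(a, b)`, for every
parameter `q` in `U`; the ordered zeros of a family of functions are followed through the
parameter. The values of `X` outside `U` are left free, so that boundary values can be assigned. -/
structure IsOrderedZeros {Q : Type*} {m : ℕ} (f : Q → ℝ → ℝ) (U : Set Q) (a b : ℝ)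
    (X : Q → Fin m → ℝ) : Prop where
  strictMono : ∀ q ∈ U, StrictMono (X q)
  range_eq : ∀ q ∈ U, range (X q) = {x ∈ Ioo a b | f q x = 0}

namespace IsOrderedZeros

variable {Q : Type*} {m : ℕ} {f : Q → ℝ → ℝ} {U : Set Q} {a b : ℝ} {X Y : Q → Fin m → ℝ} {q q₀ : Q}

theorem exists_of_encard_eq (h : ∀ q ∈ U, {x ∈ Ioo a b | f q x = 0}.encard = m) :
    ∃ X : Q → Fin m → ℝ, IsOrderedZeros f U a b X := by
  choose! X hmono hrange using fun q hq => exists_strictMono_range_eq_of_encard_eq (h q hq)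
  exact ⟨X, hmono, hrange⟩

theorem congr (hX : IsOrderedZeros f U a b X) (hXY : EqOn Y X U) : IsOrderedZeros f U a b Y where
  strictMono q hq := hXY hq ▸ hX.strictMono q hq
  range_eq q hq := hXY hq ▸ hX.range_eq q hq

theorem mem_Ioo_and_eq_zero (hX : IsOrderedZeros f U a b X) (hq : q ∈ U) (j : Fin m) :
    X q j ∈ Ioo a b ∧ f q (X q j) = 0 :=
  (hX.range_eq q hq).subset (mem_range_self j)

theorem mem_Ioo (hX : IsOrderedZeros f U a b X) (hq : q ∈ U) (j : Fin m) : X q j ∈ Ioo a b :=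
  (hX.mem_Ioo_and_eq_zero hq j).1

theorem eq_zero (hX : IsOrderedZeros f U a b X) (hq : q ∈ U) (j : Fin m) : f q (X q j) = 0 :=
  (hX.mem_Ioo_and_eq_zero hq j).2

theorem eq_of_strictMono (hX : IsOrderedZeros f U a b X) (hq : q ∈ U) {y : Fin m → ℝ}
    (hy : StrictMono y) (hmem : ∀ j, y j ∈ Ioo a b) (hzero : ∀ j, f q (y j) = 0) : X q = y := by
  have hsub : range y ⊆ range (X q) := by
    rw [hX.range_eq q hq]
    exact range_subset_iff.2 fun j => ⟨hmem j, hzero j⟩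
  have hcard : (range (X q)).ncard ≤ (range y).ncard := by
    simp only [← image_univ, ncard_image_of_injective _ hy.injective,
      ncard_image_of_injective _ (hX.strictMono q hq).injective, le_refl]
  exact ((hX.strictMono q hq).range_inj hy).1 (eq_of_subset_of_ncard_le hsub hcard).symm

section Continuity

variable [TopologicalSpace Q]

/- The lists that are strictly increasing with entries in `(a, b)` form an open set, so any choice
of zeros of `f r` near the entries of `X q` is such a list and must be `X r`. -/
theorem continuousAt (hX : IsOrderedZeros f U a b X) (hf : Continuous (Function.uncurry f))
    (hU : U ∈ 𝓝 q) (hd : ∀ j, deriv (f q) (X q j) ≠ 0) : ContinuousAt X q := by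
  have hq := mem_of_mem_nhds hU
  intro W hW
  have hopen : {y : Fin m → ℝ | StrictMono y} ∩ univ.pi (fun _ => Ioo a b) ∈ 𝓝 (X q) :=
    ((isOpen_setOf_strictMono_fin m).inter
      (isOpen_set_pi finite_univ fun _ _ => isOpen_Ioo)).mem_nhds
        ⟨hX.strictMono q hq, fun j _ => hX.mem_Ioo hq j⟩
  obtain ⟨I, V, hV, hsub⟩ := mem_pi'.1 (nhds_pi (a := X q) ▸ inter_mem hW hopen)
  have hzero : ∀ᶠ r in 𝓝 q, ∀ j, ∃ y ∈ V j, f r y = 0 := eventually_all.2 fun j =>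
    eventually_exists_zero_of_deriv_ne_zero (fun y => (hf.comp (.prodMk_left y)).continuousAt)
      (fun r => hf.comp (.prodMk_right r)) (hX.eq_zero hq j) (hd j) (hV j)
  change ∀ᶠ r in 𝓝 q, X r ∈ W
  filter_upwards [hzero, hU] with r hr hrU
  choose y hyV hy0 using hr
  obtain ⟨hyW, hymono, hymem⟩ := hsub fun j _ => hyV j
  rw [hX.eq_of_strictMono hrU hymono (fun j => hymem j trivial) hy0]
  exact hyW

theorem eventually_notMem_of_isCompact (hX : IsOrderedZeros f U a b X)
    (hf : Continuous (Function.uncurry f)) {K : Set ℝ} (hK : IsCompact K)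
    (hne : ∀ x ∈ K, f q₀ x ≠ 0) (j : Fin m) : ∀ᶠ q in 𝓝[U] q₀, X q j ∉ K := by
  have hnear : ∀ᶠ q in 𝓝 q₀, ∀ x ∈ K, f q x ≠ 0 :=
    hK.eventually_forall_of_forall_eventually fun x hx =>
      hf.continuousAt.eventually_ne (hne x hx)
  filter_upwards [hnear.filter_mono nhdsWithin_le_nhds, self_mem_nhdsWithin] with q hq hqU hK
  exact hq _ hK (hX.eq_zero hqU j)

theorem tendsto_right (hX : IsOrderedZeros f U a b X) (hf : Continuous (Function.uncurry f))
    (hne : ∀ x ∈ Ico a b, f q₀ x ≠ 0) (j : Fin m) :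
    Tendsto (fun q => X q j) (𝓝[U] q₀) (𝓝 b) := by
  refine tendsto_order.2 ⟨fun c hc => ?_, fun c hc => ?_⟩
  · filter_upwards [hX.eventually_notMem_of_isCompact hf (isCompact_Icc (a := a) (b := c))
      (fun x hx => hne x ⟨hx.1, hx.2.trans_lt hc⟩) j, self_mem_nhdsWithin] with q hq hqU
    exact not_le.1 fun h => hq ⟨(hX.mem_Ioo hqU j).1.le, h⟩
  · filter_upwards [self_mem_nhdsWithin] with q hqU using (hX.mem_Ioo hqU j).2.trans hc

theorem tendsto_left (hX : IsOrderedZeros f U a b X) (hf : Continuous (Function.uncurry f))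
    (hne : ∀ x ∈ Ioc a b, f q₀ x ≠ 0) (j : Fin m) :
    Tendsto (fun q => X q j) (𝓝[U] q₀) (𝓝 a) := by
  refine tendsto_order.2 ⟨fun c hc => ?_, fun c hc => ?_⟩
  · filter_upwards [self_mem_nhdsWithin] with q hqU using hc.trans (hX.mem_Ioo hqU j).1
  · filter_upwards [hX.eventually_notMem_of_isCompact hf (isCompact_Icc (a := c) (b := b))
      (fun x hx => hne x ⟨hc.trans_le hx.1, hx.2⟩) j, self_mem_nhdsWithin] with q hq hqU
    exact not_le.1 fun h => hq ⟨h, (hX.mem_Ioo hqU j).2.le⟩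

end Continuity

theorem injOn_of_encard_level_le (hX : IsOrderedZeros f U a b X)
    (hsurj : ∀ j, Ioo a b ⊆ (fun q => X q j) '' U)
    (hlevel : ∀ x ∈ Ioo a b, {q ∈ U | f q x = 0}.encard ≤ m) (j : Fin m) :
    InjOn (fun q => X q j) U := by
  intro p hp r hr hpr
  set x := X p j
  have hx : x ∈ Ioo a b := hX.mem_Ioo hp j
  obtain ⟨hfin, hcard⟩ := encard_le_coe_iff_finite_ncard_le.1 (hlevel x hx)
  have := hfin.to_subtype
  have hindex : ∀ q : {q ∈ U | f q x = 0}, ∃ i, X q i = x := fun q =>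
    (hX.range_eq q q.2.1).superset ⟨hx, q.2.2⟩
  choose ι hι using hindex
  have hι_surj : Function.Surjective ι := fun i => by
    obtain ⟨q, hqU, hq⟩ := hsurj i hx
    have hq0 : f q x = 0 := by simpa only [← hq] using hX.eq_zero hqU i
    exact ⟨⟨q, hqU, hq0⟩, (hX.strictMono q hqU).injective ((hι ⟨q, hqU, hq0⟩).trans hq.symm)⟩
  have hι_inj := (hι_surj.bijective_of_nat_card_le (by simpa using hcard)).injective
  have hι_eq : ∀ q (hq : q ∈ {q ∈ U | f q x = 0}), X q j = x → ι ⟨q, hq⟩ = j := fun q hq hqx =>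
    (hX.strictMono q hq.1).injective ((hι ⟨q, hq⟩).trans hqx.symm)
  have hpS : p ∈ {q ∈ U | f q x = 0} := ⟨hp, hX.eq_zero hp j⟩
  have hrx : X r j = x := hpr.symm
  have hrS : r ∈ {q ∈ U | f q x = 0} := ⟨hr, by simpa only [hrx] using hX.eq_zero hr j⟩
  exact congrArg Subtype.val (hι_inj ((hι_eq p hpS rfl).trans (hι_eq r hrS hrx).symm))

end IsOrderedZeros

namespace IsOrderedZeros

variable {m : ℕ} {f : ℝ → ℝ → ℝ} {a b c d : ℝ} {X : ℝ → Fin m → ℝ}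

theorem continuousOn_Ioc (hX : IsOrderedZeros f (Ioo c d) a b X)
    (hf : Continuous (Function.uncurry f))
    (hderiv : ∀ q ∈ Ioo c d, ∀ x, f q x = 0 → deriv (f q) x ≠ 0)
    (hne : ∀ x ∈ Ico a b, f d x ≠ 0) (hXd : ∀ j, X d j = b) (j : Fin m) :
    ContinuousOn (fun q => X q j) (Ioc c d) := by
  intro q hq
  rcases hq.2.eq_or_lt with rfl | hqd
  · rw [← Ioo_insert_right hq.1, continuousWithinAt_insert_self, ContinuousWithinAt, hXd]
    exact hX.tendsto_right hf hne j
  · have hq' : q ∈ Ioo c d := ⟨hq.1, hqd⟩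
    have hcont := hX.continuousAt hf (isOpen_Ioo.mem_nhds hq') fun i =>
      hderiv q hq' _ (hX.eq_zero hq' i)
    exact ((continuousAt_pi.1 hcont) j).continuousWithinAt

/- By the intermediate value theorem each of the `m` curves meets every level in `(a, b)`, so a
level met at most `m` times is met exactly once by each of them. -/
theorem strictMonoOn_Ioo (hX : IsOrderedZeros f (Ioo c d) a b X)
    (hlevel : ∀ x ∈ Ioo a b, {q ∈ Ioo c d | f q x = 0}.encard ≤ m)
    (hcont : ∀ j, ContinuousOn (fun q => X q j) (Ioo c d))
    (hlim_left : ∀ j, Tendsto (fun q => X q j) (𝓝[Ioo c d] c) (𝓝 a))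
    (hlim_right : ∀ j, Tendsto (fun q => X q j) (𝓝[Ioo c d] d) (𝓝 b)) (j : Fin m) :
    StrictMonoOn (fun q => X q j) (Ioo c d) := by
  rcases le_or_gt d c with hdc | hcd
  · simp [Ioo_eq_empty_of_le hdc, StrictMonoOn]
  have : (𝓝[Ioo c d] c).NeBot := nhdsWithin_Ioo_eq_nhdsGT hcd ▸ inferInstance
  have : (𝓝[Ioo c d] d).NeBot := nhdsWithin_Ioo_eq_nhdsLT hcd ▸ inferInstance
  have hsurj : ∀ i, Ioo a b ⊆ (fun q => X q i) '' Ioo c d := fun i =>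
    isPreconnected_Ioo.intermediate_value_Ioo (l₁ := 𝓝[Ioo c d] c) (l₂ := 𝓝[Ioo c d] d)
      inf_le_right inf_le_right (hcont i) (hlim_left i) (hlim_right i)
  refine ((hcont j).strictMonoOn_of_injOn_Ioo hcd
    (hX.injOn_of_encard_level_le hsurj hlevel j)).resolve_right fun hanti => ?_
  obtain ⟨q, hq⟩ := nonempty_Ioo.2 hcd
  have hle : ∀ᶠ r in 𝓝[Ioo c d] d, X r j ≤ X q j := by
    filter_upwards [self_mem_nhdsWithin, nhdsWithin_le_nhds (lt_mem_nhds hq.2)] with r hr hqr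
    exact (hanti hq hr hqr).le
  exact (hX.mem_Ioo hq j).2.not_ge (le_of_tendsto (hlim_right j) hle)

theorem strictMonoOn_Ioc (hX : IsOrderedZeros f (Ioo c d) a b X) (hXd : ∀ j, X d j = b)
    {j : Fin m} (hmono : StrictMonoOn (fun q => X q j) (Ioo c d)) :
    StrictMonoOn (fun q => X q j) (Ioc c d) := by
  intro q hq r hr hqr
  have hq' : q ∈ Ioo c d := ⟨hq.1, hqr.trans_le hr.2⟩
  rcases hr.2.eq_or_lt with rfl | hrd
  · simpa only [hXd] using (hX.mem_Ioo hq' j).2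
  · exact hmono hq' ⟨hr.1, hrd⟩ hqr

end IsOrderedZeros

section ScaleRoots

theorem eval_scaleRoots_eq_prod_roots {K : Type*} [Field K] {p : K[X]} (hp : p.Splits)
    (hm : p.Monic) (q z : K) :
    (p.scaleRoots q).eval z = (p.roots.map fun ζ => z - q * ζ).prod := by
  have hprod : ∀ s : Multiset K, ((s.map fun ζ => X - C ζ).prod.scaleRoots q).eval z =
      (s.map fun ζ => z - q * ζ).prod := fun s => by
    induction s using Multiset.induction_on with
    | empty => simp [one_scaleRoots]
    | cons ζ s ih => simp [mul_scaleRoots_of_noZeroDivisors, ih, mul_comm ζ q]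
  rw [← hprod, ← hp.eq_prod_roots_of_monic hm]

theorem norm_sub_smul_le_norm_smul_sub {E : Type*} [NormedAddCommGroup E] [InnerProductSpace ℝ E]
    {q : ℝ} (hq : |q| ≤ 1) {x y : E} (hxy : ‖x‖ ≤ ‖y‖) : ‖x - q • y‖ ≤ ‖q • x - y‖ := by
  have hidentity : ‖q • x - y‖ ^ 2 - ‖x - q • y‖ ^ 2 = (1 - q ^ 2) * (‖y‖ ^ 2 - ‖x‖ ^ 2) := by
    rw [norm_sub_sq_real, norm_sub_sq_real, norm_smul, norm_smul, real_inner_smul_left,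
      real_inner_smul_right, mul_pow, mul_pow, Real.norm_eq_abs, sq_abs]
    ring
  have hq2 : 0 ≤ 1 - q ^ 2 := sub_nonneg.2 ((sq_le_one_iff_abs_le_one q).2 hq)
  have hxy2 : 0 ≤ ‖y‖ ^ 2 - ‖x‖ ^ 2 := sub_nonneg.2 (by gcongr)
  exact (sq_le_sq₀ (norm_nonneg _) (norm_nonneg _)).1
    (sub_nonneg.1 (hidentity ▸ mul_nonneg hq2 hxy2))

variable {p : ℂ[X]} {q : ℝ} {z : ℂ}

theorem norm_eval_mul_eq_prod_roots (hm : p.Monic) (q : ℝ) (z : ℂ) :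
    ‖p.eval (q * z)‖ = (p.roots.map fun ζ => ‖q • z - ζ‖).prod := by
  rw [(IsAlgClosed.splits p).eval_eq_prod_roots_of_monic hm, ← Complex.real_smul]
  exact (map_multiset_prod (normHom (α := ℂ)) _).trans (by rw [Multiset.map_map]; rfl)

theorem norm_eval_scaleRoots_eq_prod_roots (hm : p.Monic) (q : ℝ) (z : ℂ) :
    ‖(p.scaleRoots q).eval z‖ = (p.roots.map fun ζ => ‖z - q • ζ‖).prod := by
  rw [eval_scaleRoots_eq_prod_roots (IsAlgClosed.splits p) hm]
  exact (map_multiset_prod (normHom (α := ℂ)) _).trans (by rw [Multiset.map_map]; rfl)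

theorem norm_eval_scaleRoots_le (hm : p.Monic) (hroots : ∀ ζ ∈ p.roots, ‖ζ‖ = 1) (hq : |q| ≤ 1)
    (hz : ‖z‖ ≤ 1) : ‖(p.scaleRoots q).eval z‖ ≤ ‖p.eval (q * z)‖ := by
  rw [norm_eval_scaleRoots_eq_prod_roots hm, norm_eval_mul_eq_prod_roots hm]
  exact Multiset.prod_map_le_prod_map₀ _ _ (fun _ _ => norm_nonneg _) fun ζ hζ =>
    norm_sub_smul_le_norm_smul_sub hq (hz.trans_eq (hroots ζ hζ).symm)

theorem norm_eval_mul_le (hm : p.Monic) (hroots : ∀ ζ ∈ p.roots, ‖ζ‖ = 1) (hq : |q| ≤ 1)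
    (hz : 1 ≤ ‖z‖) : ‖p.eval (q * z)‖ ≤ ‖(p.scaleRoots q).eval z‖ := by
  rw [norm_eval_scaleRoots_eq_prod_roots hm, norm_eval_mul_eq_prod_roots hm]
  refine Multiset.prod_map_le_prod_map₀ _ _ (fun _ _ => norm_nonneg _) fun ζ hζ => ?_
  rw [norm_sub_rev, norm_sub_rev z]
  exact norm_sub_smul_le_norm_smul_sub hq ((hroots ζ hζ).trans_le hz)

theorem norm_eq_abs_of_eval_scaleRoots_eq_zero (hm : p.Monic) (hroots : ∀ ζ ∈ p.roots, ‖ζ‖ = 1)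
    (hz : (p.scaleRoots q).eval z = 0) : ‖z‖ = |q| := by
  rw [eval_scaleRoots_eq_prod_roots (IsAlgClosed.splits p) hm, Multiset.prod_eq_zero_iff,
    Multiset.mem_map] at hz
  obtain ⟨ζ, hζ, hzζ⟩ := hz
  rw [sub_eq_zero.1 hzζ, norm_mul, hroots ζ hζ, mul_one, Complex.norm_real, Real.norm_eq_abs]

end ScaleRoots

/-- The partition function of the ferromagnetic Ising model on the complete graph with `n`
vertices, as a polynomial in the fugacity `X`: a configuration with `k` up spins has `k * (n - k)`
unequal pairs, each of weight `q`. -/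
noncomputable def leeYang {R : Type*} [CommRing R] (n : ℕ) (q : R) : R[X] :=
  ∑ k ∈ Finset.range (n + 1), C ((n.choose k : R) * q ^ (k * (n - k))) * X ^ k

section LeeYang

variable {R : Type*} [CommRing R] {n : ℕ} {q : ℝ} {z : ℂ}

theorem eval_leeYang (n : ℕ) (q z : R) : (leeYang n q).eval z =
    ∑ k ∈ Finset.range (n + 1), (n.choose k : R) * q ^ (k * (n - k)) * z ^ k := by
  simp [leeYang, eval_finsetSum]

theorem coeff_leeYang (n : ℕ) (q : R) (k : ℕ) :
    (leeYang n q).coeff k = n.choose k * q ^ (k * (n - k)) := by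
  simp only [leeYang, finsetSum_coeff, coeff_C_mul, coeff_X_pow, mul_ite, mul_one, mul_zero,
    Finset.sum_ite_eq, Finset.mem_range]
  split_ifs with hk
  · rfl
  · rw [Nat.choose_eq_zero_of_lt (by lia), Nat.cast_zero, zero_mul]

theorem natDegree_leeYang [Nontrivial R] (n : ℕ) (q : R) : (leeYang n q).natDegree = n := by
  refine natDegree_eq_of_le_of_coeff_ne_zero (natDegree_le_iff_coeff_eq_zero.2 fun k hk => ?_) ?_
  · rw [coeff_leeYang, Nat.choose_eq_zero_of_lt hk, Nat.cast_zero, zero_mul]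
  · simp [coeff_leeYang]

theorem monic_leeYang (n : ℕ) (q : R) : (leeYang n q).Monic := by
  nontriviality R
  rw [Monic, leadingCoeff, natDegree_leeYang, coeff_leeYang]
  simp

theorem coeff_scaleRoots_leeYang (n : ℕ) (q : R) (k : ℕ) :
    ((leeYang n q).scaleRoots q).coeff k = n.choose k * q ^ ((k + 1) * (n - k)) := by
  nontriviality R
  rw [coeff_scaleRoots, coeff_leeYang, natDegree_leeYang, mul_assoc, ← pow_add, add_one_mul]

/- The two terms collect the configurations in which an additional spin is down, respectively up. -/
theorem leeYang_succ (n : ℕ) (q : R) :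
    leeYang (n + 1) q = (leeYang n q).comp (C q * X) + X * (leeYang n q).scaleRoots q := by
  ext (_ | k)
  · simp [coeff_leeYang]
  have hdown : ((n.choose (k + 1) : ℕ) : R) * q ^ ((k + 1) * (n - (k + 1))) * q ^ (k + 1) =
      (n.choose (k + 1) : ℕ) * q ^ ((k + 1) * (n - k)) := by
    rcases lt_or_ge n (k + 1) with hk | hk
    · simp [Nat.choose_eq_zero_of_lt hk]
    · rw [mul_assoc, ← pow_add, ← mul_add_one, show n - (k + 1) + 1 = n - k by lia]
  rw [coeff_add, comp_C_mul_X_coeff, coeff_X_mul, coeff_scaleRoots_leeYang, coeff_leeYang,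
    coeff_leeYang, hdown, Nat.choose_succ_succ', Nat.add_sub_add_right]
  push_cast
  ring

theorem derivative_leeYang_succ (n : ℕ) (q : R) :
    derivative (leeYang (n + 1) q) = C (n + 1 : R) * (leeYang n q).scaleRoots q := by
  ext k
  have hchoose : ((n + 1 : ℕ) : R) * n.choose k = (n + 1).choose (k + 1) * (k + 1 : ℕ) :=
    mod_cast congrArg (Nat.cast (R := R)) (Nat.add_one_mul_choose_eq n k)
  rw [coeff_derivative, coeff_C_mul, coeff_scaleRoots_leeYang, coeff_leeYang, Nat.add_sub_add_right]
  push_cast at hchoose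
  linear_combination -q ^ ((k + 1) * (n - k)) * hchoose

theorem norm_eq_one_of_eval_leeYang_eq_zero (hq : |q| < 1)
    (hz : (leeYang n (q : ℂ)).eval z = 0) : ‖z‖ = 1 := by
  induction n generalizing z with
  | zero => simp [eval_leeYang] at hz
  | succ n ih =>
    have hm := monic_leeYang n (q : ℂ)
    have hroots : ∀ ζ ∈ (leeYang n (q : ℂ)).roots, ‖ζ‖ = 1 := fun ζ hζ =>
      ih (isRoot_of_mem_roots hζ)
    have hnorm : ‖(leeYang n (q : ℂ)).eval (q * z)‖ =
        ‖z‖ * ‖((leeYang n (q : ℂ)).scaleRoots q).eval z‖ := by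
      rw [leeYang_succ, eval_add, eval_comp, eval_mul, eval_mul, eval_C, eval_X,
        add_eq_zero_iff_eq_neg] at hz
      rw [hz, norm_neg, norm_mul]
    rcases lt_trichotomy ‖z‖ 1 with hlt | heq | hgt
    · have hle := norm_eval_scaleRoots_le hm hroots hq.le hlt.le
      have hqz : (leeYang n (q : ℂ)).eval (q * z) = 0 :=
        norm_le_zero_iff.1 (by nlinarith [norm_nonneg z])
      have := ih hqz
      rw [norm_mul, Complex.norm_real, Real.norm_eq_abs] at this
      nlinarith [norm_nonneg z]
    · exact heq
    · have hle := norm_eval_mul_le hm hroots hq.le hgt.le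
      have hzero : ((leeYang n (q : ℂ)).scaleRoots q).eval z = 0 :=
        norm_le_zero_iff.1 (by nlinarith)
      linarith [norm_eq_abs_of_eval_scaleRoots_eq_zero hm hroots hzero]

theorem eval_derivative_leeYang_ne_zero (hq : |q| < 1)
    (hz : (leeYang n (q : ℂ)).eval z = 0) : (derivative (leeYang n (q : ℂ))).eval z ≠ 0 := by
  rcases n with _ | n
  · simp [eval_leeYang] at hz
  rw [derivative_leeYang_succ, eval_mul, eval_C]
  refine mul_ne_zero (by exact_mod_cast n.succ_ne_zero) fun h => ?_
  have hzq := norm_eq_abs_of_eval_scaleRoots_eq_zero (monic_leeYang n (q : ℂ))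
    (fun ζ hζ => norm_eq_one_of_eval_leeYang_eq_zero hq (isRoot_of_mem_roots hζ)) h
  exact hq.ne (hzq.symm.trans (norm_eq_one_of_eval_leeYang_eq_zero hq hz))

theorem nodup_roots_leeYang (n : ℕ) (hq : |q| < 1) : (leeYang n (q : ℂ)).roots.Nodup := by
  rw [Multiset.nodup_iff_count_le_one]
  intro z
  by_contra! h
  rw [count_roots, one_lt_rootMultiplicity_iff_isRoot (monic_leeYang n _).ne_zero] at h
  exact eval_derivative_leeYang_ne_zero hq h.1 h.2

theorem encard_zeros_leeYang (n : ℕ) (hq : |q| < 1) :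
    {z | (leeYang n (q : ℂ)).eval z = 0}.encard = n := by
  have hset : {z | (leeYang n (q : ℂ)).eval z = 0} = (leeYang n (q : ℂ)).roots.toFinset := by
    ext z
    simp [mem_roots (monic_leeYang n (q : ℂ)).ne_zero]
  rw [hset, encard_coe_eq_coe_finsetCard,
    Multiset.toFinset_card_of_nodup (nodup_roots_leeYang n hq),
    ← (IsAlgClosed.splits _).natDegree_eq_card_roots, natDegree_leeYang]

end LeeYang

section TrigSums

variable {n : ℕ} {a : ℕ → ℝ}

theorem sum_range_mul_sin_eq_zero (ha : ∀ k ≤ n, a (n - k) = a k) (x : ℝ) :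
    ∑ k ∈ Finset.range (n + 1), a k * Real.sin ((n - 2 * k) * x) = 0 := by
  rw [← self_eq_neg, ← Finset.sum_neg_distrib]
  conv_lhs => rw [← Finset.sum_range_reflect]
  refine Finset.sum_congr rfl fun k hk => ?_
  have hkn : k ≤ n := Finset.mem_range_succ_iff.1 hk
  rw [Nat.add_sub_cancel, ha k hkn, Nat.cast_sub hkn, ← mul_neg, ← Real.sin_neg]
  congr 2
  ring

theorem ofReal_sum_range_mul_cos (ha : ∀ k ≤ n, a (n - k) = a k) (x : ℝ) :
    ((∑ k ∈ Finset.range (n + 1), a k * Real.cos ((n - 2 * k) * x) : ℝ) : ℂ) =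
      ∑ k ∈ Finset.range (n + 1), a k * Complex.exp ((2 * k - n) * x * Complex.I) := by
  have hsin := congrArg (fun y : ℝ => (y : ℂ) * Complex.I) (sum_range_mul_sin_eq_zero ha x)
  simp only [Complex.ofReal_zero, zero_mul] at hsin
  rw [← sub_zero (Complex.ofReal _), ← hsin, Complex.ofReal_sum, Complex.ofReal_sum,
    Finset.sum_mul, ← Finset.sum_sub_distrib]
  refine Finset.sum_congr rfl fun k _ => ?_
  rw [show ((2 * k - n) * x * Complex.I : ℂ) = -(((n - 2 * k) * x : ℝ) : ℂ) * Complex.I by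
    push_cast; ring, Complex.exp_mul_I, Complex.cos_neg, Complex.sin_neg]
  push_cast
  ring

end TrigSums

theorem choose_add_two_mul (n k : ℕ) :
    (n + 2).choose (k + 1) * ((k + 1) * (n + 1 - k)) = (n + 2) * (n + 1) * n.choose k := by
  have hsucc := Nat.add_one_mul_choose_eq n k
  have hcompl := Nat.choose_mul_succ_eq (n + 1) (k + 1)
  rw [Nat.add_sub_add_right] at hcompl
  calc (n + 2).choose (k + 1) * ((k + 1) * (n + 1 - k))
      = (n + 2).choose (k + 1) * (n + 1 - k) * (k + 1) := by ring
    _ = (n + 2) * ((n + 1).choose (k + 1) * (k + 1)) := by rw [← hcompl]; ring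
    _ = (n + 2) * (n + 1) * n.choose k := by rw [← hsucc]; ring

/-- The Lee–Yang polynomial on the unit circle: `exp (-n * x * I) * (leeYang n q).eval z` at
`z = exp (2 * x * I)`, which is real because the coefficients are symmetric. -/
noncomputable def leeYangTrig (n : ℕ) (q x : ℝ) : ℝ :=
  ∑ k ∈ Finset.range (n + 1), n.choose k * q ^ (k * (n - k)) * Real.cos ((n - 2 * k) * x)

section LeeYangTrig

variable {n m : ℕ} {q x : ℝ}

theorem ofReal_leeYangTrig (n : ℕ) (q x : ℝ) :
    (leeYangTrig n q x : ℂ) = Complex.exp (-(n * x * Complex.I)) *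
      (leeYang n (q : ℂ)).eval (Complex.exp (2 * x * Complex.I)) := by
  have hsymm : ∀ k ≤ n, (n.choose (n - k) : ℝ) * q ^ ((n - k) * (n - (n - k))) =
      n.choose k * q ^ (k * (n - k)) := fun k hk => by
    rw [Nat.choose_symm hk, Nat.sub_sub_self hk, mul_comm k]
  rw [leeYangTrig, ofReal_sum_range_mul_cos hsymm, eval_leeYang, Finset.mul_sum]
  refine Finset.sum_congr rfl fun k _ => ?_
  rw [← Complex.exp_nat_mul, mul_left_comm, ← Complex.exp_add]
  push_cast
  congr 2
  ring

theorem leeYangTrig_eq_zero_iff :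
    leeYangTrig n q x = 0 ↔ (leeYang n (q : ℂ)).eval (Complex.exp (2 * x * Complex.I)) = 0 := by
  rw [← Complex.ofReal_eq_zero, ofReal_leeYangTrig, mul_eq_zero_iff_left (Complex.exp_ne_zero _)]

theorem continuous_uncurry_leeYangTrig (n : ℕ) : Continuous (Function.uncurry (leeYangTrig n)) := by
  unfold leeYangTrig Function.uncurry
  fun_prop

theorem leeYangTrig_neg (n : ℕ) (q x : ℝ) : leeYangTrig n q (-x) = leeYangTrig n q x := by
  simp only [leeYangTrig, mul_neg, Real.cos_neg]

theorem leeYangTrig_neg_pi_div_two_sub (m : ℕ) (q x : ℝ) :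
    leeYangTrig (2 * m) (-q) (π / 2 - x) = (-1) ^ m * leeYangTrig (2 * m) q x := by
  rw [leeYangTrig, leeYangTrig, Finset.mul_sum]
  refine Finset.sum_congr rfl fun k hk => ?_
  have hk' : k ≤ 2 * m := Finset.mem_range_succ_iff.1 hk
  have hparity : (-1 : ℝ) ^ (k * (2 * m - k)) = (-1) ^ k := by
    rw [neg_one_pow_congr]
    simp [Nat.even_mul, Nat.even_sub hk']
  have hsign : (-1 : ℝ) ^ k * (-1) ^ ((m : ℤ) - k) = (-1) ^ m := by
    rw [← zpow_natCast, ← zpow_add₀ (by norm_num), add_sub_cancel, zpow_natCast]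
  rw [show (((2 * m : ℕ) : ℝ) - 2 * k) * (π / 2 - x) =
      ((m - k : ℤ) : ℝ) * π - ((2 * m : ℕ) - 2 * k) * x by push_cast; ring,
    Real.cos_int_mul_pi_sub, neg_pow, hparity, ← hsign]
  ring

theorem leeYangTrig_zero_left (hn : n ≠ 0) (x : ℝ) : leeYangTrig n 0 x = 2 * Real.cos (n * x) := by
  obtain ⟨n, rfl⟩ := Nat.exists_eq_succ_of_ne_zero hn
  have hmiddle : ∀ k ∈ Finset.range n, ((n + 1).choose (k + 1) : ℝ) *
      0 ^ ((k + 1) * (n + 1 - (k + 1))) * Real.cos (((n + 1 : ℕ) - 2 * (k + 1 : ℕ)) * x) = 0 :=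
    fun k hk => by
      have : (k + 1) * (n + 1 - (k + 1)) ≠ 0 :=
        mul_ne_zero k.succ_ne_zero (by have := Finset.mem_range.1 hk; lia)
      rw [zero_pow this, mul_zero, zero_mul]
  rw [leeYangTrig, Finset.sum_range_succ, Finset.sum_range_succ', Finset.sum_eq_zero hmiddle,
    show (((n + 1 : ℕ) : ℝ) - 2 * (n + 1 : ℕ)) * x = -((n + 1 : ℕ) * x) by ring, Real.cos_neg]
  simp [two_mul]

theorem leeYangTrig_one_left (n : ℕ) (x : ℝ) : leeYangTrig n 1 x = (2 * Real.cos x) ^ n := by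
  have heval : ∀ z : ℂ, (leeYang n (1 : ℂ)).eval z = (z + 1) ^ n := fun z => by
    simp [eval_leeYang, add_pow, mul_comm]
  rw [← Complex.ofReal_inj, ofReal_leeYangTrig, Complex.ofReal_one, heval,
    show -(n * x * Complex.I) = n * (-(x * Complex.I)) by ring, Complex.exp_nat_mul, ← mul_pow,
    mul_add, ← Complex.exp_add, mul_one]
  push_cast
  rw [Complex.two_cos]
  congr 3 <;> ring_nf

theorem leeYangTrig_one_left_ne_zero (n : ℕ) (hx : x ∈ Ico 0 (π / 2)) :
    leeYangTrig n 1 x ≠ 0 := by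
  have hcos : 0 < Real.cos x :=
    Real.cos_pos_of_mem_Ioo ⟨(neg_lt_zero.2 Real.pi_div_two_pos).trans_le hx.1, hx.2⟩
  rw [leeYangTrig_one_left]
  positivity

theorem leeYangTrig_neg_one_left_ne_zero (m : ℕ) (hx : x ∈ Ioc 0 (π / 2)) :
    leeYangTrig (2 * m) (-1) x ≠ 0 := by
  rw [← sub_sub_cancel (π / 2) x, leeYangTrig_neg_pi_div_two_sub]
  exact mul_ne_zero (pow_ne_zero m (by norm_num))
    (leeYangTrig_one_left_ne_zero (2 * m) ⟨sub_nonneg.2 hx.2, sub_lt_self _ hx.1⟩)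

theorem hasDerivAt_leeYangTrig_left (n : ℕ) (q x : ℝ) :
    HasDerivAt (fun q => leeYangTrig (n + 2) q x)
      ((n + 2) * (n + 1) * q ^ n * leeYangTrig n q x) q := by
  have hsum : HasDerivAt (fun q => leeYangTrig (n + 2) q x)
      (∑ k ∈ Finset.range (n + 2 + 1), ((n + 2).choose k : ℝ) *
        ((k * (n + 2 - k) : ℕ) * q ^ (k * (n + 2 - k) - 1)) *
          Real.cos (((n + 2 : ℕ) - 2 * k) * x)) q :=
    HasDerivAt.fun_sum fun k _ => ((hasDerivAt_pow _ q).const_mul _).mul_const _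
  convert hsum using 1
  rw [Finset.sum_range_succ, Finset.sum_range_succ', leeYangTrig, Finset.mul_sum]
  simp only [Nat.sub_self, mul_zero, zero_mul, Nat.cast_zero, add_zero]
  refine Finset.sum_congr rfl fun k hk => ?_
  have hk' : k ≤ n := Finset.mem_range_succ_iff.1 hk
  have hexp : (k + 1) * (n + 1 - k) - 1 = n + k * (n - k) := by
    obtain ⟨j, rfl⟩ := Nat.exists_eq_add_of_le hk'
    rw [Nat.add_sub_cancel_left, show k + j + 1 - k = j + 1 by lia]
    exact Nat.sub_eq_of_eq_add (by ring)
  have hchoose := congrArg (Nat.cast (R := ℝ)) (choose_add_two_mul n k)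
  have hfreq : ((n + 2 : ℕ) : ℝ) - 2 * (k + 1 : ℕ) = n - 2 * k := by push_cast; ring
  rw [show n + 2 - (k + 1) = n + 1 - k by lia, hexp, pow_add, hfreq]
  push_cast at hchoose ⊢
  linear_combination -(q ^ n * q ^ (k * (n - k)) * Real.cos ((n - 2 * k) * x)) * hchoose

theorem deriv_leeYangTrig_ne_zero (hq : |q| < 1) (hx : leeYangTrig n q x = 0) :
    deriv (leeYangTrig n q) x ≠ 0 := by
  have hz := leeYangTrig_eq_zero_iff.1 hx
  have hlin : ∀ c : ℂ, HasDerivAt (fun w : ℂ => c * w * Complex.I) (c * Complex.I) x := fun c => by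
    simpa using ((hasDerivAt_id (x : ℂ)).const_mul c).mul_const Complex.I
  have hcomplex := ((hlin n).fun_neg.cexp.mul
    (((leeYang n (q : ℂ)).hasDerivAt _).comp (x : ℂ) (hlin 2).cexp)).comp_ofReal
  have hreal : HasDerivAt (fun y => (leeYangTrig n q y : ℂ)) (deriv (leeYangTrig n q) x : ℝ) x :=
    HasDerivAt.ofReal_comp (by
      have : Differentiable ℝ (leeYangTrig n q) := by unfold leeYangTrig; fun_prop
      exact (this x).hasDerivAt)
  have hderiv := hreal.unique (hcomplex.congr_of_eventuallyEq
    (.of_forall (ofReal_leeYangTrig n q)))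
  rw [← Complex.ofReal_ne_zero, hderiv, Function.comp_apply, hz]
  simpa using eval_derivative_leeYang_ne_zero hq hz

theorem leeYangTrig_zero_right_ne_zero (n : ℕ) (hq : |q| < 1) : leeYangTrig n q 0 ≠ 0 := by
  intro h
  have heven : deriv (leeYangTrig n q) 0 = -deriv (leeYangTrig n q) 0 := by
    simpa [leeYangTrig_neg] using deriv_comp_neg (leeYangTrig n q) 0
  exact deriv_leeYangTrig_ne_zero hq h (self_eq_neg.1 heven)

theorem leeYangTrig_pi_div_two_right_ne_zero (m : ℕ) (hq : |q| < 1) :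
    leeYangTrig (2 * m) q (π / 2) ≠ 0 := by
  rw [← sub_zero (π / 2), ← neg_neg q, leeYangTrig_neg_pi_div_two_sub]
  exact mul_ne_zero (pow_ne_zero m (by norm_num))
    (leeYangTrig_zero_right_ne_zero (2 * m) (by rwa [abs_neg]))

theorem encard_zeros_leeYangTrig_right (n : ℕ) (hq : |q| < 1) :
    {x ∈ Ioc (-(π / 2)) (π / 2) | leeYangTrig n q x = 0}.encard = n := by
  have harg : ∀ y ∈ Ioc (-(π / 2)) (π / 2), (Complex.exp (2 * y * Complex.I)).arg / 2 = y := by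
    intro y hy
    rw [show (2 * y * Complex.I : ℂ) = (2 * y : ℝ) * Complex.I by push_cast; rfl,
      Complex.arg_exp_mul_I, (toIocMod_eq_self _).2 ⟨by linarith [hy.1], by linarith [hy.2]⟩,
      mul_div_cancel_left₀ y two_ne_zero]
  have hexp : ∀ z : ℂ, (leeYang n (q : ℂ)).eval z = 0 →
      Complex.exp (2 * (z.arg / 2 : ℝ) * Complex.I) = z := by
    intro z hz
    have := Complex.norm_mul_exp_arg_mul_I z
    rw [norm_eq_one_of_eval_leeYang_eq_zero hq hz, Complex.ofReal_one, one_mul] at this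
    rw [Complex.ofReal_div, Complex.ofReal_ofNat, mul_div_cancel₀ _ two_ne_zero, this]
  have himage : (fun z : ℂ => z.arg / 2) '' {z | (leeYang n (q : ℂ)).eval z = 0} =
      {y ∈ Ioc (-(π / 2)) (π / 2) | leeYangTrig n q y = 0} := by
    ext y
    constructor
    · rintro ⟨z, hz, rfl⟩
      refine ⟨⟨?_, ?_⟩, leeYangTrig_eq_zero_iff.2 ((hexp z hz).symm ▸ hz)⟩
      · linarith [Complex.neg_pi_lt_arg z]
      · linarith [Complex.arg_le_pi z]
    · rintro ⟨hy, hy0⟩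
      exact ⟨_, leeYangTrig_eq_zero_iff.1 hy0, harg y hy⟩
  have hinj : InjOn (fun z : ℂ => z.arg / 2) {z | (leeYang n (q : ℂ)).eval z = 0} := by
    intro z hz w hw hzw
    rw [← hexp z hz, ← hexp w hw]
    exact congrArg (fun y : ℝ => Complex.exp (2 * y * Complex.I)) hzw
  rw [← encard_zeros_leeYang n hq, ← himage, hinj.encard_image]

theorem encard_zeros_leeYangTrig_two_mul_right (m : ℕ) (hq : |q| < 1) :
    {x ∈ Ioo 0 (π / 2) | leeYangTrig (2 * m) q x = 0}.encard = m := by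
  set A := {x ∈ Ioo 0 (π / 2) | leeYangTrig (2 * m) q x = 0}
  have hsplit : {x ∈ Ioc (-(π / 2)) (π / 2) | leeYangTrig (2 * m) q x = 0} = A ∪ Neg.neg '' A := by
    ext y
    simp only [mem_union, mem_image, A]
    constructor
    · rintro ⟨hy, hy0⟩
      have hy_ne : y ≠ 0 := by
        rintro rfl
        exact leeYangTrig_zero_right_ne_zero _ hq hy0
      have hy_lt : y < π / 2 := hy.2.lt_of_ne fun h =>
        leeYangTrig_pi_div_two_right_ne_zero m hq (h ▸ hy0)
      rcases hy_ne.lt_or_gt with hneg | hpos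
      · exact .inr ⟨-y, ⟨⟨neg_pos.2 hneg, neg_lt.1 hy.1⟩, by rwa [leeYangTrig_neg]⟩, neg_neg y⟩
      · exact .inl ⟨⟨hpos, hy_lt⟩, hy0⟩
    · rintro (⟨hy, hy0⟩ | ⟨y, ⟨hy, hy0⟩, rfl⟩)
      · exact ⟨⟨by linarith [hy.1, hy.2], hy.2.le⟩, hy0⟩
      · exact ⟨⟨neg_lt_neg hy.2, by linarith [hy.1, hy.2]⟩, by rwa [leeYangTrig_neg]⟩
  have hdisj : Disjoint A (Neg.neg '' A) := by
    rw [disjoint_left]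
    rintro _ hx ⟨y, hy, rfl⟩
    exact (neg_pos.1 hx.1.1).not_gt hy.1.1
  have hcard := encard_zeros_leeYangTrig_right (2 * m) hq
  rw [hsplit, encard_union_eq hdisj, neg_injective.encard_image, ← two_mul] at hcard
  exact (ENat.mul_right_strictMono two_ne_zero (ENat.natCast_ne_top 2)).injective
    (by simpa using hcard)

theorem encard_zeros_leeYangTrig_left_le (m : ℕ) (x : ℝ) :
    {q | leeYangTrig (2 * m) q x = 0}.encard ≤ m := by
  induction m with
  | zero => simp [leeYangTrig]
  | succ m ih =>
    have hrolle : {q | leeYangTrig (2 * m + 2) q x = 0}.encard ≤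
        {q | leeYangTrig (2 * m) q x = 0}.encard + 1 := by
      refine encard_zeros_le_encard_zeros_add_one
        (fun q => hasDerivAt_leeYangTrig_left (2 * m) q x) (fun q => ?_)
        ((dense_compl_singleton (0 : ℝ)).mono fun q hq => ?_)
        ((continuous_uncurry_leeYangTrig (2 * m)).comp (.prodMk_left x))
      · have := (even_two_mul m).pow_nonneg q
        positivity
      · have : q ≠ 0 := hq
        exact mul_ne_zero (by positivity) (pow_ne_zero _ this)
    simpa [mul_add] using hrolle.trans (by gcongr)

theorem exists_isOrderedZeros_leeYangTrig (m : ℕ) : ∃ X : ℝ → Fin m → ℝ,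
    IsOrderedZeros (leeYangTrig (2 * m)) (Ioo (-1) 1) 0 (π / 2) X ∧ ∀ j, X 1 j = π / 2 := by
  obtain ⟨X, hX⟩ := IsOrderedZeros.exists_of_encard_eq (f := leeYangTrig (2 * m))
    fun q hq => encard_zeros_leeYangTrig_two_mul_right m (abs_lt.2 (mem_Ioo.1 hq))
  refine ⟨Function.update X 1 fun _ => π / 2, hX.congr fun q hq => ?_, fun j => ?_⟩
  · exact Function.update_of_ne hq.2.ne _ X
  · rw [Function.update_self]

variable {X : ℝ → Fin m → ℝ}

theorem continuousOn_of_isOrderedZeros_leeYangTrig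
    (hX : IsOrderedZeros (leeYangTrig (2 * m)) (Ioo (-1) 1) 0 (π / 2) X)
    (hX1 : ∀ j, X 1 j = π / 2) (j : Fin m) : ContinuousOn (fun q => X q j) (Ioc (-1) 1) :=
  hX.continuousOn_Ioc (continuous_uncurry_leeYangTrig _)
    (fun _ hq _ => deriv_leeYangTrig_ne_zero (abs_lt.2 hq))
    (fun _ => leeYangTrig_one_left_ne_zero _) hX1 j

theorem strictMonoOn_of_isOrderedZeros_leeYangTrig
    (hX : IsOrderedZeros (leeYangTrig (2 * m)) (Ioo (-1) 1) 0 (π / 2) X)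
    (hX1 : ∀ j, X 1 j = π / 2) (j : Fin m) : StrictMonoOn (fun q => X q j) (Ioc (-1) 1) := by
  have hf := continuous_uncurry_leeYangTrig (2 * m)
  refine hX.strictMonoOn_Ioc hX1 (hX.strictMonoOn_Ioo (fun x _ => ?_)
    (fun i => (continuousOn_of_isOrderedZeros_leeYangTrig hX hX1 i).mono Ioo_subset_Ioc_self)
    (fun i => hX.tendsto_left hf (fun _ => leeYangTrig_neg_one_left_ne_zero m) i)
    (fun i => hX.tendsto_right hf (fun _ => leeYangTrig_one_left_ne_zero (2 * m)) i) j)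
  exact (encard_le_encard fun q hq => hq.2).trans (encard_zeros_leeYangTrig_left_le m x)

theorem apply_zero_of_isOrderedZeros_leeYangTrig
    (hX : IsOrderedZeros (leeYangTrig (2 * m)) (Ioo (-1) 1) 0 (π / 2) X) (j : Fin m) :
    X 0 j = (2 * j + 1) * π / (2 * (2 * m : ℕ)) := by
  have hm : (0 : ℝ) < m := mod_cast j.pos
  refine congrFun (hX.eq_of_strictMono (by simp)
    (y := fun i => (2 * i + 1) * π / (2 * (2 * m : ℕ))) (fun i k hik => ?_) (fun i => ⟨?_, ?_⟩)
    fun i => ?_) j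
  · have : (i : ℝ) < k := mod_cast hik
    dsimp only
    gcongr
    push_cast
    positivity
  · push_cast
    positivity
  · have hi : (i : ℝ) + 1 ≤ m := mod_cast i.2
    rw [div_lt_div_iff₀ (by push_cast; positivity) two_pos]
    push_cast
    nlinarith [Real.pi_pos]
  · rw [leeYangTrig_zero_left (by have := i.pos; lia), mul_eq_zero_iff_left two_ne_zero,
      Real.cos_eq_zero_iff]
    refine ⟨i, ?_⟩
    push_cast
    field_simp

end LeeYangTrig

section CurieWeiss

variable {n m : ℕ} {t x : ℝ}

theorem sum_spin_s12 (σ : Fin n → Bool) :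
    ∑ j, spin (σ j) = 2 * ((Finset.univ.filter fun j => σ j = true).card : ℝ) - n := by
  have hspin : ∀ b, spin b = 2 * (if b = true then 1 else 0) - 1 := by
    rintro (_ | _) <;> norm_num [spin]
  simp only [hspin, Finset.sum_sub_distrib, ← Finset.mul_sum, Finset.sum_boole]
  simp

theorem sum_apply_sum_spin {M : Type*} [AddCommMonoid M] (n : ℕ) (F : ℝ → M) :
    ∑ σ : Fin n → Bool, F (∑ j, spin (σ j)) =
      ∑ k ∈ Finset.range (n + 1), n.choose k • F (2 * k - n) := by
  have hcard := Finset.sum_powerset_apply_card (fun k : ℕ => F (2 * k - n))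
    (x := (Finset.univ : Finset (Fin n)))
  rw [Finset.card_univ, Fintype.card_fin, Finset.powerset_univ] at hcard
  rw [← hcard]
  exact Finset.sum_bij' (fun σ _ => Finset.univ.filter fun j => σ j = true)
    (fun s _ j => decide (j ∈ s)) (by simp) (by simp) (by simp) (by simp)
    fun σ _ => by rw [sum_spin_s12]

theorem CWZ_eq (n : ℕ) (t x : ℝ) :
    CWZ n t x = Real.exp (t * n ^ 2) * leeYangTrig n (Real.exp (-4 * t)) x := by
  rw [CWZ, sum_apply_sum_spin n fun s : ℝ =>
      Complex.exp (t * (s : ℂ) ^ 2 + Complex.I * x * (s : ℂ)),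
    ofReal_leeYangTrig, eval_leeYang, Finset.mul_sum, Finset.mul_sum]
  refine Finset.sum_congr rfl fun k hk => ?_
  have hk' : k ≤ n := Finset.mem_range_succ_iff.1 hk
  rw [nsmul_eq_mul, Complex.ofReal_exp, Complex.ofReal_exp, ← Complex.exp_nat_mul,
    ← Complex.exp_nat_mul, mul_assoc (n.choose k : ℂ), ← Complex.exp_add,
    mul_left_comm (Complex.exp (-_)), mul_left_comm (Complex.exp _) (n.choose k : ℂ),
    ← Complex.exp_add, ← Complex.exp_add]
  congr 2
  push_cast [hk']
  ring

theorem CWZ_eq_zero_iff : CWZ n t x = 0 ↔ leeYangTrig n (Real.exp (-4 * t)) x = 0 := by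
  rw [CWZ_eq, mul_eq_zero_iff_left (by simp), Complex.ofReal_eq_zero]

theorem setOf_CWZ_eq_zero_eq_range {X : ℝ → Fin m → ℝ}
    (hX : IsOrderedZeros (leeYangTrig (2 * m)) (Ioo (-1) 1) 0 (π / 2) X)
    (ht : Real.exp (-4 * t) ∈ Ioo (-1) 1) :
    {z : ℝ | z ∈ Ioc 0 (π / 2) ∧ CWZ (2 * m) t z = 0} = range (X (Real.exp (-4 * t))) := by
  rw [hX.range_eq _ ht]
  ext z
  rw [mem_ofPred_eq, mem_ofPred_eq, CWZ_eq_zero_iff]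
  refine ⟨fun ⟨hz, hz0⟩ => ⟨⟨hz.1, hz.2.lt_of_ne ?_⟩, hz0⟩, fun ⟨hz, hz0⟩ => ⟨⟨hz.1, hz.2.le⟩, hz0⟩⟩
  rintro rfl
  exact leeYangTrig_pi_div_two_right_ne_zero m (abs_lt.2 ht) hz0

theorem exists_zero_curves_CWZ (m : ℕ) : ∃ y : Fin m → ℝ → ℝ,
    (∀ j, ContinuousOn (y j) (Ici 0)) ∧ (∀ j, y j 0 = π / 2) ∧
    (∀ t, 0 < t → StrictMono (fun j => y j t) ∧ (∀ j, y j t ∈ Ioo 0 (π / 2)) ∧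
      {z : ℝ | z ∈ Ioc 0 (π / 2) ∧ CWZ (2 * m) t z = 0} = range fun j => y j t) ∧
    (∀ j, StrictAntiOn (y j) (Ici 0)) ∧
    ∀ j, Tendsto (y j) atTop (𝓝 ((2 * j + 1) * π / (2 * (2 * m : ℕ)))) := by
  obtain ⟨X, hX, hX1⟩ := exists_isOrderedZeros_leeYangTrig m
  have hcont := continuousOn_of_isOrderedZeros_leeYangTrig hX hX1
  have hanti : StrictAnti fun t : ℝ => Real.exp (-4 * t) :=
    Real.exp_strictMono.comp_strictAnti (strictAnti_mul_left (by norm_num))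
  have hmaps : MapsTo (fun t : ℝ => Real.exp (-4 * t)) (Ici 0) (Ioc (-1) 1) := fun t ht =>
    ⟨neg_one_lt_zero.trans (Real.exp_pos _), by simpa using hanti.antitone (mem_Ici.1 ht)⟩
  have hmaps' : ∀ t : ℝ, 0 < t → Real.exp (-4 * t) ∈ Ioo (-1) 1 := fun t ht =>
    ⟨(hmaps ht.le).1, by simpa using hanti ht⟩
  have hlim : Tendsto (fun t : ℝ => Real.exp (-4 * t)) atTop (𝓝 0) :=
    Real.tendsto_exp_atBot.comp (tendsto_id.const_mul_atTop_of_neg (by norm_num))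
  refine ⟨fun j t => X (Real.exp (-4 * t)) j, fun j => (hcont j).comp (by fun_prop) hmaps,
    fun j => by simp [hX1], fun t ht => ⟨hX.strictMono _ (hmaps' t ht), hX.mem_Ioo (hmaps' t ht),
      setOf_CWZ_eq_zero_eq_range hX (hmaps' t ht)⟩, fun j => ?_, fun j => ?_⟩
  · exact (strictMonoOn_of_isOrderedZeros_leeYangTrig hX hX1 j).comp_strictAntiOn
      (hanti.strictAntiOn _) hmaps
  · rw [← apply_zero_of_isOrderedZeros_leeYangTrig hX j]
    exact ((hcont j).continuousAt (Ioc_mem_nhds (by norm_num) one_pos)).tendsto.comp hlim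

end CurieWeiss

theorem forall_mem_Icc_one_iff_forall_fin {m : ℕ} {P : ℕ → Prop} :
    (∀ k ∈ Finset.Icc 1 m, P k) ↔ ∀ j : Fin m, P (j + 1) := by
  refine ⟨fun h j => h _ (Finset.mem_Icc.2 ⟨by lia, j.2⟩), fun h k hk => ?_⟩
  obtain ⟨hk1, hkm⟩ := Finset.mem_Icc.1 hk
  simpa only [Nat.sub_add_cancel hk1] using h ⟨k - 1, by lia⟩

theorem image_Icc_one_eq_range_fin {α : Type*} (m : ℕ) (g : ℕ → α) :
    g '' Icc 1 m = range fun j : Fin m => g (j + 1) := by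
  refine Subset.antisymm (image_subset_iff.2 fun k hk => ?_) (range_subset_iff.2 fun j =>
    mem_image_of_mem g ⟨by lia, j.2⟩)
  exact forall_mem_Icc_one_iff_forall_fin (P := fun k => g k ∈ range fun j : Fin m => g (j + 1)).2
    mem_range_self k (Finset.mem_Icc.2 hk)

theorem stmt12 (n : ℕ) (hn : 0 < n) (heven : Even n) :
    ∃ x : ℕ → ℝ → ℝ,
      (∀ k ∈ Finset.Icc 1 (n / 2), ContinuousOn (x k) (Set.Ici 0)) ∧
      (∀ k ∈ Finset.Icc 1 (n / 2), x k 0 = π / 2) ∧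
      (∀ t : ℝ, 0 < t →
        (∀ k ∈ Finset.Icc 1 (n / 2), 0 < x k t ∧ x k t < π / 2) ∧
        (∀ k, 1 ≤ k → k < n / 2 → x k t < x (k + 1) t) ∧
        {z : ℝ | z ∈ Set.Ioc 0 (π / 2) ∧ CWZ n t z = 0}
          = (fun k => x k t) '' Set.Icc 1 (n / 2)) ∧
      (∀ k ∈ Finset.Icc 1 (n / 2),
        StrictAntiOn (x k) (Set.Ici 0) ∧
        Filter.Tendsto (x k) Filter.atTop
          (nhds ((2 * (k : ℝ) - 1) * π / (2 * (n : ℝ))))) := by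
  obtain ⟨m, rfl⟩ := heven.two_dvd
  obtain ⟨y, hcont, hy0, hzeros, hanti, hlim⟩ := exists_zero_curves_CWZ m
  let x : ℕ → ℝ → ℝ := fun k => if h : k - 1 < m then y ⟨k - 1, h⟩ else 0
  have hx : ∀ j : Fin m, x (j + 1) = y j := fun j => by simp [x]
  rw [Nat.mul_div_cancel_left m two_pos]
  simp only [forall_mem_Icc_one_iff_forall_fin, image_Icc_one_eq_range_fin]
  refine ⟨x, fun j => ?_, fun j => ?_, fun t ht => ⟨fun j => ?_, fun k hk1 hkm => ?_, ?_⟩,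
    fun j => ⟨?_, ?_⟩⟩
  · exact (hx j).symm ▸ hcont j
  · exact (hx j).symm ▸ hy0 j
  · exact (hx j).symm ▸ (hzeros t ht).2.1 j
  · obtain ⟨i, rfl⟩ := Nat.exists_eq_add_of_le' hk1
    rw [hx ⟨i, by lia⟩, hx ⟨i + 1, hkm⟩]
    exact (hzeros t ht).1 (Fin.mk_lt_mk.2 i.lt_succ_self)
  · simpa only [hx] using (hzeros t ht).2.2
  · exact (hx j).symm ▸ hanti j
  · rw [hx j]
    convert hlim j using 3
    push_cast
    ring
end
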